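/- (Bernstein–Gortler–Theran) For a linear subspace $L$ of the space $\mathcal{S}^n$ of real symmetric $n\times n$ matrices that contains a positive definite matrix, let $\mathcal{M}_L = L \cap \{\text{positive definite matrices}\}$. The maximum likelihood threshold of $\mathcal{M}_L$ is the smallest positive integer $d$ such that for Lebesgue-almost every real $n\times d$ matrix $X$, the function $K \mapsto \operatorname{tr}(XX^{T}K) - \log\det K$ attains a minimum on $\mathcal{M}_L$. Fix $n \ge 1$ and let $1 \le m \le n(n+1)/2$. For Lebesgue-almost every $m$-tuple $(B_1,\dots,B_m)$ of real symmetric $n\times n$ matrices (with respect to Lebesgue measure on the $m$-fold product of $\mathcal{S}^n$) such that each $B_i$ is positive definite, letting $L$ be the linear span of $B_1,\dots,B_m$, the maximum likelihood threshold of $\mathcal{M}_L$ equals the minimum positive integer $d$ such that $m \le nd - \frac{d(d-1)}{2}$. -/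

import Mathlib

open MeasureTheory
open scoped Matrix

noncomputable section

/-- The objective function `K ↦ tr(S K) − log det K` of Gaussian maximum likelihood. -/
def mlObjective {n : ℕ} (S K : Matrix (Fin n) (Fin n) ℝ) : ℝ :=
  (S * K).trace - Real.log K.det

/-- The function `K ↦ tr(S K) − log det K` attains a minimum on `M`. -/
def MLEExists {n : ℕ} (M : Set (Matrix (Fin n) (Fin n) ℝ)) (S : Matrix (Fin n) (Fin n) ℝ) : Prop :=
  ∃ K ∈ M, ∀ K' ∈ M, mlObjective S K ≤ mlObjective S K'

/-- `d` is the maximum likelihood threshold of the set `M` of positive definite matrices: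
the smallest positive integer such that for Lebesgue-almost every real `n × d`
matrix `X`, the function `K ↦ tr(X Xᵀ K) − log det K` attains a minimum on `M`. -/
def IsMLThreshold {n : ℕ} (M : Set (Matrix (Fin n) (Fin n) ℝ)) (d : ℕ) : Prop :=
  IsLeast {e : ℕ | 0 < e ∧ ∀ᵐ X : Fin n → Fin e → ℝ ∂volume,
    MLEExists M (Matrix.of X * (Matrix.of X)ᵀ)} d

/-- The linear concentration model `L ∩ {positive definite matrices}`.
(`Matrix.PosDef` includes symmetry.) -/
def linearConcentrationModel {n : ℕ} (L : Submodule ℝ (Matrix (Fin n) (Fin n) ℝ)) :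
    Set (Matrix (Fin n) (Fin n) ℝ) :=
  {K | K ∈ L ∧ K.PosDef}

/-- The symmetric matrix whose `(i,j)` entry is `f s(i,j)`; this identifies the space of
real symmetric `n × n` matrices with `Sym2 (Fin n) → ℝ`, carrying Lebesgue measure. -/
def symMatrixOf {n : ℕ} (f : Sym2 (Fin n) → ℝ) : Matrix (Fin n) (Fin n) ℝ :=
  Matrix.of fun i j => f s(i, j)

end

/-!
The objective attains its minimum at `X` if and only if no nonzero positive semidefinite `K ∈ L`
satisfies `K X = 0`: along such a `K` the trace is constant while `log det` increases strictly, and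
without one the sublevel sets are compact. Write `n = d + q`. For `X` of full rank, the symmetric
matrices with `K X = 0` form a space of dimension `dim S^q`, and
`n d - d (d - 1) / 2 = dim S^n - dim S^q`.

If `m ≤ dim S^n - dim S^q`, then `L` generically meets this space only in `0`. This needs a single
example, since the exceptional set is cut out by analytic equations.

If `m > k := dim S^n - dim S^q`, choose `k` generators `β` and a positive semidefinite `B ∈ L`
independent of them. By the theorem of Barvinok and Pataki, `B + span β` contains a positive
semidefinite matrix of rank at most `q`, which can be written `Y A Yᵀ` with `Y` of size `n × q`. For
generic `(β, B)` one can choose `A` positive definite and the solution nondegenerate, so that it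
persists as `Y` varies. Hence the matrices `X` annihilated by a nonzero positive
semidefinite element of `L` contain a nonempty open set.
-/

section HaarMeasure

variable {ι κ ι' κ' : Type*} [Fintype ι] [Fintype κ] [Fintype ι']

-- Instance search fails to unify the measurable structures on the nested products below.
instance isAddHaarMeasure_volume_pi_pi : (volume : Measure (ι → κ → ℝ)).IsAddHaarMeasure :=
  have : SigmaFinite (volume : Measure (κ → ℝ)) := inferInstance
  have : MeasurableAdd (κ → ℝ) := inferInstance
  have : (volume : Measure (κ → ℝ)).IsAddHaarMeasure := inferInstance
  Measure.pi.isAddHaarMeasure _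

instance isAddHaarMeasure_volume_pi_pi_prod_pi :
    (volume : Measure ((ι → κ → ℝ) × (ι' → ℝ))).IsAddHaarMeasure :=
  Measure.prod.instIsAddHaarMeasure _ _

instance isAddHaarMeasure_volume_pi_prod_pi_pi :
    (volume : Measure ((ι' → ℝ) × (ι → κ → ℝ))).IsAddHaarMeasure :=
  Measure.prod.instIsAddHaarMeasure _ _

instance isAddHaarMeasure_volume_pi_pi_prod_pi_pi [Fintype κ'] :
    (volume : Measure ((ι → κ → ℝ) × (ι' → κ' → ℝ))).IsAddHaarMeasure :=
  Measure.prod.instIsAddHaarMeasure _ _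

end HaarMeasure

section AlmostEverywhere

variable {E : Type*} [NormedAddCommGroup E] [NormedSpace ℝ E] [FiniteDimensional ℝ E]
  [MeasurableSpace E] [BorelSpace E] {μ : Measure E} [μ.IsAddHaarMeasure]

theorem ae_comp_of_surjective {F : Type*} [NormedAddCommGroup F] [NormedSpace ℝ F]
    [MeasurableSpace F] [BorelSpace F] {ν : Measure F} [ν.IsAddHaarMeasure]
    (L : E →ₗ[ℝ] F) (hL : Function.Surjective L) {p : F → Prop} (h : ∀ᵐ y ∂ν, p y) :
    ∀ᵐ x ∂μ, p (L x) := by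
  have : ProperSpace E := FiniteDimensional.proper ℝ E
  obtain ⟨s, hs, hsm, hs0⟩ := exists_measurable_superset_of_null (ae_iff.mp h)
  have hLs : ∀ᵐ x ∂μ, L x ∈ sᶜ :=
    (ae_comp_linearMap_mem_iff L μ ν hL hsm.compl).2 (measure_eq_zero_iff_ae_notMem.mp hs0)
  filter_upwards [hLs] with x hx
  by_contra hp
  exact hx (hs hp)

theorem ae_ne_zero_of_analyticOnNhd_real {g : ℝ → ℝ} (hg : AnalyticOnNhd ℝ g Set.univ) {s₀ : ℝ}
    (h₀ : g s₀ ≠ 0) : ∀ᵐ s, g s ≠ 0 := by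
  have hae := ae_restrict_le_codiscreteWithin (μ := (volume : Measure ℝ)) MeasurableSet.univ
    (hg.preimage_zero_mem_codiscrete h₀)
  rw [Measure.restrict_univ] at hae
  filter_upwards [hae] with s hs
  simpa using hs

-- The zero set is null on every line through `x₀`; by Fubini some homothety of centre `x₀`
-- carries it to a null set.
theorem ae_ne_zero_of_analyticOnNhd {f : E → ℝ} (hf : AnalyticOnNhd ℝ f Set.univ) {x₀ : E}
    (h₀ : f x₀ ≠ 0) : ∀ᵐ x ∂μ, f x ≠ 0 := by
  have hfc : Continuous f := by simpa [continuousOn_univ] using hf.continuousOn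
  have hlines (x : E) : ∀ᵐ s : ℝ, f (x₀ + s • x) ≠ 0 := by
    have hline : AnalyticOnNhd ℝ (fun s : ℝ => x₀ + s • x) Set.univ := fun s _ => by fun_prop
    exact ae_ne_zero_of_analyticOnNhd_real (hf.comp hline (Set.mapsTo_univ _ _)) (s₀ := 0)
      (by simpa using h₀)
  have hmeas : MeasurableSet {p : E × ℝ | f (x₀ + p.2 • p.1) ≠ 0} :=
    (isOpen_ne_fun (by fun_prop) continuous_const).measurableSet
  have hscale : ∀ᵐ s : ℝ, ∀ᵐ x ∂μ, f (x₀ + s • x) ≠ 0 :=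
    (Measure.ae_ae_comm hmeas).1 (Filter.Eventually.of_forall hlines)
  obtain ⟨s, hs, hs₀⟩ := (hscale.and (Measure.ae_ne volume 0)).exists
  have hunscale : ∀ᵐ x ∂μ, f (x₀ + s • (s⁻¹ • LinearMap.id : E →ₗ[ℝ] E) x) ≠ 0 :=
    ae_comp_of_surjective _ (fun x => ⟨s • x, by simp [smul_smul, hs₀]⟩) hs
  filter_upwards [(measurePreserving_sub_right μ x₀).quasiMeasurePreserving.ae hunscale] with x hx
  simpa [smul_smul, hs₀] using hx

end AlmostEverywhere

section InjectiveFamilies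

variable {V W : Type*} [AddCommGroup V] [Module ℝ V] [FiniteDimensional ℝ V]
  [NormedAddCommGroup W] [NormedSpace ℝ W]

theorem injective_of_det_comp_ne_zero {P : W →ₗ[ℝ] V} {T : V →ₗ[ℝ] W}
    (h : LinearMap.det (P ∘ₗ T) ≠ 0) : Function.Injective T := by
  have : Function.Injective (P ∘ₗ T) := (LinearMap.equivOfDetNeZero _ h).injective
  exact Function.Injective.of_comp this

theorem analyticOnNhd_det_comp [FiniteDimensional ℝ W] {E : Type*} [NormedAddCommGroup E]
    [NormedSpace ℝ E] {T : E → V →ₗ[ℝ] W}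
    (hT : ∀ v, AnalyticOnNhd ℝ (fun x => T x v) Set.univ) (P : W →ₗ[ℝ] V) :
    AnalyticOnNhd ℝ (fun x => LinearMap.det (P ∘ₗ T x)) Set.univ := by
  let b := Module.finBasis ℝ V
  have hentry (i j) :
      AnalyticOnNhd ℝ (fun x => LinearMap.toMatrix b b (P ∘ₗ T x) i j) Set.univ := by
    simp only [LinearMap.toMatrix_apply, LinearMap.comp_apply]
    exact ((b.coord i ∘ₗ P).toContinuousLinearMap).comp_analyticOnNhd (hT (b j))
  simp only [← LinearMap.det_toMatrix b, Matrix.det_apply']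
  intro x hx
  exact Finset.analyticAt_fun_sum _ fun σ _ => analyticAt_const.mul <|
    Finset.analyticAt_fun_prod _ fun i _ => hentry _ _ x hx

theorem ae_injective_of_analyticOnNhd [FiniteDimensional ℝ W] {E : Type*} [NormedAddCommGroup E]
    [NormedSpace ℝ E] [FiniteDimensional ℝ E] [MeasurableSpace E] [BorelSpace E] {μ : Measure E}
    [μ.IsAddHaarMeasure] {T : E → V →ₗ[ℝ] W}
    (hT : ∀ v, AnalyticOnNhd ℝ (fun x => T x v) Set.univ) {x₀ : E}
    (h₀ : Function.Injective (T x₀)) : ∀ᵐ x ∂μ, Function.Injective (T x) := by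
  obtain ⟨P, hP⟩ := (T x₀).exists_leftInverse_of_injective (LinearMap.ker_eq_bot.2 h₀)
  have hdet := ae_ne_zero_of_analyticOnNhd (μ := μ) (analyticOnNhd_det_comp hT P)
    (x₀ := x₀) (by simp [hP])
  filter_upwards [hdet] with x hx using injective_of_det_comp_ne_zero hx

theorem isOpen_setOf_injective_of_continuous {X : Type*} [TopologicalSpace X]
    {T : X → V →ₗ[ℝ] W} (hT : ∀ v, Continuous fun x => T x v) :
    IsOpen {x | Function.Injective (T x)} := by
  let b := Module.finBasis ℝ V
  have hb (x) : Function.Injective (T x) ↔ LinearIndependent ℝ fun i => T x (b i) := by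
    refine ⟨fun h => b.linearIndependent.map' (T x) (LinearMap.ker_eq_bot.2 h), fun h => ?_⟩
    rw [← LinearMap.ker_eq_bot, LinearMap.ker_eq_bot']
    intro v hv
    rw [← b.sum_repr v, map_sum] at hv
    simp only [map_smul] at hv
    have := Fintype.linearIndependent_iff.1 h _ hv
    exact b.ext_elem fun i => by simp [this]
  simp only [hb]
  exact isOpen_setOfPred_linearIndependent.preimage (continuous_pi fun i => hT (b i))

end InjectiveFamilies

section Persistence

variable {E F G : Type*} [NormedAddCommGroup E] [NormedSpace ℝ E] [CompleteSpace E]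
  [NormedAddCommGroup F] [NormedSpace ℝ F] [CompleteSpace F]
  [NormedAddCommGroup G] [NormedSpace ℝ G] [CompleteSpace G]

theorem eventually_exists_eq_of_surjective {f : E × F → G} {x₀ : E} {y₀ : F}
    (hf : ContDiff ℝ 1 f) {f' : E →L[ℝ] G} (hf' : HasFDerivAt (fun x => f (x, y₀)) f' x₀)
    (hsurj : Function.Surjective f') {U : Set E} (hU : U ∈ nhds x₀) :
    ∀ᶠ p : G × F in nhds (f (x₀, y₀), y₀), ∃ x ∈ U, f (x, p.2) = p.1 := by
  have hD : HasStrictFDerivAt f (fderiv ℝ f (x₀, y₀)) (x₀, y₀) :=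
    hf.contDiffAt.hasStrictFDerivAt one_ne_zero
  have hpartial : ∀ x, fderiv ℝ f (x₀, y₀) (x, 0) = f' x := fun x =>
    congrArg (· x) ((hD.hasFDerivAt.comp x₀ (hasFDerivAt_prodMk_left x₀ y₀)).unique hf')
  have hrange : ((fderiv ℝ f (x₀, y₀)).prod (ContinuousLinearMap.snd ℝ E F)).range = ⊤ := by
    refine LinearMap.range_eq_top.2 fun ⟨g, y⟩ => ?_
    obtain ⟨x, hx⟩ := hsurj (g - fderiv ℝ f (x₀, y₀) (0, y))
    refine ⟨(x, y), Prod.ext ?_ rfl⟩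
    rw [← hpartial, eq_sub_iff_add_eq, ← map_add] at hx
    simpa using hx
  have hmap := (hD.prodMk hasStrictFDerivAt_snd).map_nhds_eq_of_surj hrange
  rw [← hmap, Filter.eventually_map]
  filter_upwards [prod_mem_nhds hU Filter.univ_mem] with z hz
  exact ⟨z.1, hz.1, rfl⟩

end Persistence

section PosSemidef

variable {ι : Type*}

theorem isClosed_setOf_posSemidef [Finite ι] : IsClosed {K : Matrix ι ι ℝ | K.PosSemidef} := by
  have := Fintype.ofFinite ι
  simp only [Matrix.posSemidef_iff_dotProduct_mulVec, Set.ofPred_and, Set.ofPred_forall]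
  refine IsClosed.inter (isClosed_eq (by fun_prop) (by fun_prop)) ?_
  exact isClosed_iInter fun x => isClosed_le continuous_const (by fun_prop)

theorem one_add_sum_le_prod_one_add (s : Finset ι) {f : ι → ℝ} (hf : ∀ i, 0 ≤ f i) :
    1 + ∑ i ∈ s, f i ≤ ∏ i ∈ s, (1 + f i) := by
  classical
  induction s using Finset.induction_on with
  | empty => simp
  | insert a s ha ih =>
    rw [Finset.sum_insert ha, Finset.prod_insert ha]
    have hsum : 0 ≤ ∑ i ∈ s, f i := Finset.sum_nonneg fun i _ => hf i
    nlinarith [hf a, mul_le_mul_of_nonneg_left ih (hf a), mul_nonneg (hf a) hsum]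

variable [Fintype ι]

theorem abs_apply_le_trace {K : Matrix ι ι ℝ} (hK : K.PosSemidef) (i j : ι) :
    |K i j| ≤ K.trace := by
  classical
  have hsymm : K j i = K i j := by simpa using hK.isHermitian.apply i j
  have hdiag (i) : K i i ≤ K.trace :=
    Finset.single_le_sum (f := fun i => K i i) (fun _ _ => hK.diag_nonneg) (Finset.mem_univ i)
  have hquad (s : ℝ) : 0 ≤ K i i + 2 * s * K i j + s ^ 2 * K j j := by
    have h := hK.dotProduct_mulVec_nonneg (Pi.single i 1 + s • Pi.single j 1)
    have hexpand : star (Pi.single i 1 + s • Pi.single j 1) ⬝ᵥ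
        K *ᵥ (Pi.single i 1 + s • Pi.single j 1) = K i i + 2 * s * K i j + s ^ 2 * K j j := by
      simp only [star_trivial, Matrix.mulVec_add, Matrix.mulVec_smul, add_dotProduct,
        dotProduct_add, smul_dotProduct, dotProduct_smul, single_one_dotProduct,
        Matrix.mulVec_single_one, Matrix.col_apply, smul_eq_mul, hsymm]
      ring
    rwa [hexpand] at h
  rw [abs_le]
  constructor <;> linarith [hquad 1, hquad (-1), hdiag i, hdiag j]

theorem isCompact_setOf_posSemidef_trace_le (R : ℝ) :
    IsCompact {K : Matrix ι ι ℝ | K.PosSemidef ∧ K.trace ≤ R} := by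
  have hle : IsClosed {K : Matrix ι ι ℝ | K.trace ≤ R} := isClosed_le (by fun_prop) continuous_const
  refine IsCompact.of_isClosed_subset
    (isCompact_univ_pi fun _ : ι => isCompact_univ_pi fun _ : ι => isCompact_Icc (a := -R) (b := R))
    (isClosed_setOf_posSemidef.inter hle) ?_
  rintro K ⟨hK, htr⟩ i - j -
  exact abs_le.mp ((abs_apply_le_trace hK i j).trans htr)

theorem trace_mul_transpose_mul_nonneg {κ : Type*} [Fintype κ] {K : Matrix ι ι ℝ}
    (hK : K.PosSemidef) (X : Matrix ι κ ℝ) : 0 ≤ (X * Xᵀ * K).trace := by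
  rw [Matrix.mul_assoc, Matrix.trace_mul_comm]
  simpa using (hK.conjTranspose_mul_mul_same X).trace_nonneg

theorem mul_eq_zero_of_trace_mul_transpose_mul_eq_zero {κ : Type*} [Fintype κ] {K : Matrix ι ι ℝ}
    (hK : K.PosSemidef) {X : Matrix ι κ ℝ} (h : (X * Xᵀ * K).trace = 0) : K * X = 0 := by
  have hXKX : Xᵀ * K * X = 0 := by
    have hpsd : (Xᵀ * K * X).PosSemidef := hK.conjTranspose_mul_mul_same X
    rwa [← hpsd.trace_eq_zero_iff, Matrix.trace_mul_comm, ← Matrix.mul_assoc]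
  have hcol (j : κ) : K *ᵥ X.col j = 0 := by
    rw [← hK.dotProduct_mulVec_zero_iff, star_trivial]
    rw [Matrix.mul_assoc] at hXKX
    exact congrFun₂ hXKX j j
  ext i j
  exact congrFun (hcol j) i

theorem exists_orthogonal_diagonalization [DecidableEq ι] {N : Matrix ι ι ℝ} (hN : N.IsHermitian) :
    ∃ U : Matrix ι ι ℝ, U * Uᵀ = 1 ∧ N = U * Matrix.diagonal hN.eigenvalues * Uᵀ := by
  refine ⟨hN.eigenvectorUnitary, Unitary.mul_star_self_of_mem hN.eigenvectorUnitary.2, ?_⟩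
  have := hN.spectral_theorem
  rwa [Unitary.conjStarAlgAut_apply] at this

theorem exists_eq_mul_transpose {K : Matrix ι ι ℝ} (hK : K.PosSemidef) :
    ∃ C : Matrix ι ι ℝ, K = C * Cᵀ := by
  classical
  obtain ⟨U, -, hspec⟩ := exists_orthogonal_diagonalization hK.isHermitian
  refine ⟨U * Matrix.diagonal fun i => Real.sqrt (hK.isHermitian.eigenvalues i), ?_⟩
  rw [Matrix.transpose_mul, Matrix.diagonal_transpose, ← Matrix.mul_assoc,
    Matrix.mul_assoc U (Matrix.diagonal _), Matrix.diagonal_mul_diagonal]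
  simpa only [Real.mul_self_sqrt (hK.eigenvalues_nonneg _)] using hspec

variable [DecidableEq ι]

theorem one_add_trace_le_det_one_add {N : Matrix ι ι ℝ} (hN : N.PosSemidef) :
    1 + N.trace ≤ (1 + N).det := by
  have hH := hN.isHermitian
  obtain ⟨U, hUU, hspec⟩ := exists_orthogonal_diagonalization hH
  have hdiag : 1 + N = U * (1 + Matrix.diagonal hH.eigenvalues) * Uᵀ := by
    rw [mul_add, add_mul, ← hspec, mul_one, hUU]
  have hdet : (1 + N).det = ∏ i, (1 + hH.eigenvalues i) := by
    rw [hdiag, Matrix.det_mul_right_comm, hUU, one_mul, ← Matrix.diagonal_one,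
      Matrix.diagonal_add, Matrix.det_diagonal]
  have htr : N.trace = ∑ i, hH.eigenvalues i := by simpa using hH.trace_eq_sum_eigenvalues
  rw [hdet, htr]
  exact one_add_sum_le_prod_one_add _ hN.eigenvalues_nonneg

theorem det_lt_det_add {K N : Matrix ι ι ℝ} (hK : K.PosDef) (hN : N.PosSemidef) (hne : N ≠ 0) :
    K.det < (K + N).det := by
  obtain ⟨C, rfl⟩ := exists_eq_mul_transpose hK.posSemidef
  have hC : IsUnit C.det := isUnit_iff_ne_zero.2 fun h => hK.det_pos.ne' (by simp [h])
  obtain ⟨N', hN', rfl⟩ : ∃ N' : Matrix ι ι ℝ, N'.PosSemidef ∧ C * N' * Cᵀ = N := by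
    refine ⟨C⁻¹ * N * (C⁻¹)ᵀ, hN.mul_mul_conjTranspose_same C⁻¹, ?_⟩
    have hCt : (C⁻¹)ᵀ * Cᵀ = 1 := by
      rw [← Matrix.transpose_mul, Matrix.mul_nonsing_inv _ hC, Matrix.transpose_one]
    simp only [Matrix.mul_assoc, hCt, mul_one, Matrix.mul_nonsing_inv_cancel_left _ _ hC]
  have htr : 0 < N'.trace := hN'.trace_nonneg.lt_of_ne fun h => hne <| by
    rw [hN'.trace_eq_zero_iff.1 h.symm, mul_zero, zero_mul]
  have hsum : C * Cᵀ + C * N' * Cᵀ = C * (1 + N') * Cᵀ := by rw [mul_add, add_mul, mul_one]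
  rw [hsum, Matrix.det_mul_right_comm, Matrix.det_mul (C * Cᵀ)]
  exact lt_mul_of_one_lt_right hK.det_pos (by linarith [one_add_trace_le_det_one_add hN'])

theorem log_det_le_trace_sub_card {K : Matrix ι ι ℝ} (hK : K.PosDef) :
    Real.log K.det ≤ K.trace - Fintype.card ι := by
  have hpos := hK.eigenvalues_pos
  have hdet : K.det = ∏ i, hK.isHermitian.eigenvalues i := by
    simpa using hK.isHermitian.det_eq_prod_eigenvalues
  have htr : K.trace = ∑ i, hK.isHermitian.eigenvalues i := by
    simpa using hK.isHermitian.trace_eq_sum_eigenvalues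
  rw [hdet, htr, Real.log_prod fun i _ => (hpos i).ne']
  calc ∑ i, Real.log (hK.isHermitian.eigenvalues i)
      ≤ ∑ i, (hK.isHermitian.eigenvalues i - 1) :=
        Finset.sum_le_sum fun i _ => Real.log_le_sub_one_of_pos (hpos i)
    _ = ∑ i, hK.isHermitian.eigenvalues i - Fintype.card ι := by simp

theorem log_det_le_mul_trace_sub {K : Matrix ι ι ℝ} (hK : K.PosDef) {ε : ℝ} (hε : 0 < ε) :
    Real.log K.det ≤ ε * K.trace - Fintype.card ι * (1 + Real.log ε) := by
  have h := log_det_le_trace_sub_card (hK.smul hε)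
  rw [Matrix.det_smul, Matrix.trace_smul, smul_eq_mul,
    Real.log_mul (pow_pos hε _).ne' hK.det_pos.ne', Real.log_pow] at h
  linarith

end PosSemidef

section MaximumLikelihood

variable {n e : ℕ} {L : Submodule ℝ (Matrix (Fin n) (Fin n) ℝ)} {X : Matrix (Fin n) (Fin e) ℝ}

theorem not_mleExists_of_mul_eq_zero {K₁ : Matrix (Fin n) (Fin n) ℝ} (hL : K₁ ∈ L)
    (hK₁ : K₁.PosSemidef) (hne : K₁ ≠ 0) (hX : K₁ * X = 0) :
    ¬ MLEExists (linearConcentrationModel L) (X * Xᵀ) := by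
  rintro ⟨K, ⟨hKL, hK⟩, hmin⟩
  have hle := hmin (K + K₁) ⟨L.add_mem hKL hL, hK.add_posSemidef hK₁⟩
  have htr : (X * Xᵀ * K₁).trace = 0 := by
    rw [Matrix.trace_mul_comm, ← Matrix.mul_assoc, hX, Matrix.zero_mul, Matrix.trace_zero]
  have hlog : Real.log K.det < Real.log (K + K₁).det :=
    Real.log_lt_log hK.det_pos (det_lt_det_add hK hK₁ hne)
  simp only [mlObjective, mul_add, Matrix.trace_add, htr] at hle
  linarith

theorem exists_pos_mul_trace_le (hX : ∀ K ∈ L, K.PosSemidef → K * X = 0 → K = 0) :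
    ∃ c > 0, ∀ K ∈ L, K.PosSemidef → c * K.trace ≤ (X * Xᵀ * K).trace := by
  let s : Set (Matrix (Fin n) (Fin n) ℝ) := {K | K ∈ L ∧ K.PosSemidef ∧ K.trace = 1}
  have hs : IsCompact s := (isCompact_setOf_posSemidef_trace_le 1).of_isClosed_subset
    (L.closed_of_finiteDimensional.inter (isClosed_setOf_posSemidef.inter
      (isClosed_eq (by fun_prop) continuous_const))) fun K hK => ⟨hK.2.1, hK.2.2.le⟩
  have hcont : ContinuousOn (fun K : Matrix (Fin n) (Fin n) ℝ => (X * Xᵀ * K).trace) s := by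
    fun_prop
  obtain ⟨c, hc, hcs⟩ : ∃ c > 0, ∀ K ∈ s, c ≤ (X * Xᵀ * K).trace := by
    refine hs.exists_forall_le' hcont fun K ⟨hKL, hK, htr⟩ => ?_
    refine (trace_mul_transpose_mul_nonneg hK X).lt_of_ne fun h => ?_
    have := hX K hKL hK (mul_eq_zero_of_trace_mul_transpose_mul_eq_zero hK h.symm)
    simp [this] at htr
  refine ⟨c, hc, fun K hKL hK => ?_⟩
  rcases hK.trace_nonneg.eq_or_lt with h | h
  · simp [hK.trace_eq_zero_iff.1 h.symm]
  · have := hcs ((K.trace)⁻¹ • K) ⟨L.smul_mem _ hKL, hK.smul (inv_nonneg.2 h.le), by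
      rw [Matrix.trace_smul, smul_eq_mul, inv_mul_cancel₀ h.ne']⟩
    rwa [Matrix.mul_smul, Matrix.trace_smul, smul_eq_mul, inv_mul_eq_div, le_div_iff₀ h] at this

theorem isClosed_sublevel_mlObjective (S : Matrix (Fin n) (Fin n) ℝ) (g : ℝ) :
    IsClosed {K | K ∈ linearConcentrationModel L ∧ mlObjective S K ≤ g} := by
  have hiff (K : Matrix (Fin n) (Fin n) ℝ) :
      K ∈ linearConcentrationModel L ∧ mlObjective S K ≤ g ↔
        K ∈ L ∧ K.PosSemidef ∧ Real.exp ((S * K).trace - g) ≤ K.det := by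
    have hlog (hK : 0 < K.det) : mlObjective S K ≤ g ↔ Real.exp ((S * K).trace - g) ≤ K.det := by
      rw [← Real.le_log_iff_exp_le hK, mlObjective, sub_le_comm]
    constructor
    · rintro ⟨⟨hL, hK⟩, hle⟩
      exact ⟨hL, hK.posSemidef, (hlog hK.det_pos).1 hle⟩
    · rintro ⟨hL, hK, hle⟩
      have hdet := (Real.exp_pos _).trans_le hle
      exact ⟨⟨hL, hK.posDef_iff_det_ne_zero.2 hdet.ne'⟩, (hlog hdet).2 hle⟩
  simp only [hiff]
  have hle : IsClosed {K : Matrix (Fin n) (Fin n) ℝ | Real.exp ((S * K).trace - g) ≤ K.det} :=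
    isClosed_le (by fun_prop) (by fun_prop)
  exact L.closed_of_finiteDimensional.inter (isClosed_setOf_posSemidef.inter hle)

theorem isCompact_sublevel_mlObjective (hX : ∀ K ∈ L, K.PosSemidef → K * X = 0 → K = 0) (g : ℝ) :
    IsCompact {K | K ∈ linearConcentrationModel L ∧ mlObjective (X * Xᵀ) K ≤ g} := by
  obtain ⟨c, hc, hcoer⟩ := exists_pos_mul_trace_le hX
  refine (isCompact_setOf_posSemidef_trace_le
    (2 / c * (g - n * (1 + Real.log (c / 2))))).of_isClosed_subset
      (isClosed_sublevel_mlObjective _ _) ?_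
  rintro K ⟨⟨hL, hK⟩, hle⟩
  have hlog := log_det_le_mul_trace_sub hK (half_pos hc)
  have hlin := hcoer K hL hK.posSemidef
  rw [Fintype.card_fin] at hlog
  rw [mlObjective] at hle
  refine ⟨hK.posSemidef, ?_⟩
  rw [div_mul_eq_mul_div, le_div_iff₀ hc]
  linarith

theorem mleExists_of_forall_mul_eq_zero {K₀ : Matrix (Fin n) (Fin n) ℝ}
    (hK₀ : K₀ ∈ linearConcentrationModel L) (hX : ∀ K ∈ L, K.PosSemidef → K * X = 0 → K = 0) :
    MLEExists (linearConcentrationModel L) (X * Xᵀ) := by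
  have hcont : ContinuousOn (mlObjective (X * Xᵀ)) (linearConcentrationModel L) := by
    unfold mlObjective
    refine ContinuousOn.sub (by fun_prop) (ContinuousOn.log (by fun_prop) fun K hK => ?_)
    exact hK.2.det_pos.ne'
  obtain ⟨K, hK, hmin⟩ := (isCompact_sublevel_mlObjective hX _).exists_isMinOn
    ⟨K₀, hK₀, le_rfl⟩ (hcont.mono fun K hK => hK.1)
  refine ⟨K, hK.1, fun K' hK' => ?_⟩
  rcases le_total (mlObjective (X * Xᵀ) K') (mlObjective (X * Xᵀ) K₀) with h | h
  · exact hmin ⟨hK', h⟩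
  · exact (hmin ⟨hK₀, le_rfl⟩).trans h

end MaximumLikelihood

section SymmetricCoordinates

variable {n q k : ℕ}

@[simp]
theorem symMatrixOf_apply (f : Sym2 (Fin n) → ℝ) (i j : Fin n) :
    symMatrixOf f i j = f s(i, j) := rfl

@[simp]
theorem symMatrixOf_zero : symMatrixOf (0 : Sym2 (Fin n) → ℝ) = 0 := rfl

@[simp]
theorem symMatrixOf_add (f g : Sym2 (Fin n) → ℝ) :
    symMatrixOf (f + g) = symMatrixOf f + symMatrixOf g := rfl

@[simp]
theorem symMatrixOf_smul (c : ℝ) (f : Sym2 (Fin n) → ℝ) :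
    symMatrixOf (c • f) = c • symMatrixOf f := rfl

theorem symMatrixOf_sum {ι : Type*} (s : Finset ι) (f : ι → Sym2 (Fin n) → ℝ) :
    symMatrixOf (∑ i ∈ s, f i) = ∑ i ∈ s, symMatrixOf (f i) := by
  ext
  simp [Matrix.sum_apply]

theorem isSymm_symMatrixOf (f : Sym2 (Fin n) → ℝ) : (symMatrixOf f).IsSymm := by
  ext i j
  simp [Sym2.eq_swap]

theorem symMatrixOf_injective : Function.Injective (symMatrixOf (n := n)) := by
  intro f g h
  ext ⟨i, j⟩
  exact congrFun₂ h i j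

@[fun_prop]
theorem continuous_symMatrixOf : Continuous (symMatrixOf (n := n)) := by
  unfold symMatrixOf
  fun_prop

/-- The coordinates of a symmetric matrix in the identification of `symMatrixOf`, read off its
upper triangle. -/
def symVec : Matrix (Fin n) (Fin n) ℝ →ₗ[ℝ] Sym2 (Fin n) → ℝ where
  toFun M s := M s.inf s.sup
  map_add' _ _ := rfl
  map_smul' _ _ := rfl

@[simp]
theorem symVec_apply (M : Matrix (Fin n) (Fin n) ℝ) (s : Sym2 (Fin n)) :
    symVec M s = M s.inf s.sup := rfl

theorem symMatrixOf_symVec {M : Matrix (Fin n) (Fin n) ℝ} (hM : M.IsSymm) :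
    symMatrixOf (symVec M) = M := by
  ext i j
  rcases le_total i j with h | h
  · simp [h]
  · simp [h, hM.apply]

theorem symVec_symMatrixOf (f : Sym2 (Fin n) → ℝ) : symVec (symMatrixOf f) = f :=
  symMatrixOf_injective (symMatrixOf_symVec (isSymm_symMatrixOf f))

/-- The congruence `A ↦ Y A Yᵀ` on symmetric matrices. -/
def symCongr (Y : Matrix (Fin n) (Fin q) ℝ) : (Sym2 (Fin q) → ℝ) →ₗ[ℝ] Sym2 (Fin n) → ℝ where
  toFun a := symVec (Y * symMatrixOf a * Yᵀ)
  map_add' a b := by simp [Matrix.mul_add, Matrix.add_mul]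
  map_smul' c a := by simp

theorem symCongr_apply (Y : Matrix (Fin n) (Fin q) ℝ) (a : Sym2 (Fin q) → ℝ) :
    symCongr Y a = symVec (Y * symMatrixOf a * Yᵀ) := rfl

theorem symMatrixOf_symCongr (Y : Matrix (Fin n) (Fin q) ℝ) (a : Sym2 (Fin q) → ℝ) :
    symMatrixOf (symCongr Y a) = Y * symMatrixOf a * Yᵀ :=
  symMatrixOf_symVec <|
    show (Y * symMatrixOf a * Yᵀ)ᵀ = Y * symMatrixOf a * Yᵀ by
      simp [(isSymm_symMatrixOf a).eq, Matrix.mul_assoc]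

/-- The linear pencil `(A, t) ↦ Y A Yᵀ + ∑ i, t i • β i`. The matrices in the span of `β` that
agree with `B` up to a matrix of column space `range Y` correspond to the solutions of
`symPencil β Y (A, t) = B`. -/
def symPencil (β : Fin k → Sym2 (Fin n) → ℝ) (Y : Matrix (Fin n) (Fin q) ℝ) :
    (Sym2 (Fin q) → ℝ) × (Fin k → ℝ) →ₗ[ℝ] Sym2 (Fin n) → ℝ :=
  (symCongr Y).coprod (Fintype.linearCombination ℝ β)

theorem symPencil_apply (β : Fin k → Sym2 (Fin n) → ℝ) (Y : Matrix (Fin n) (Fin q) ℝ)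
    (x : (Sym2 (Fin q) → ℝ) × (Fin k → ℝ)) :
    symPencil β Y x = symCongr Y x.1 + ∑ i, x.2 i • β i := rfl

theorem contDiff_symPencil {r : WithTop ℕ∞} :
    ContDiff ℝ r fun p : ((Sym2 (Fin q) → ℝ) × (Fin k → ℝ)) ×
      (Fin k → Sym2 (Fin n) → ℝ) × (Fin n → Fin q → ℝ) =>
        symPencil p.2.1 (Matrix.of p.2.2) p.1 := by
  refine contDiff_pi.2 fun s => ?_
  simp only [symPencil_apply, symCongr_apply, Pi.add_apply, Finset.sum_apply, Pi.smul_apply,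
    symVec_apply, Matrix.mul_apply, Matrix.transpose_apply, Matrix.of_apply, symMatrixOf_apply]
  fun_prop

end SymmetricCoordinates

section GenericMatrices

variable {e q m : ℕ}

/-- The coordinate inclusion of `ℝ^e` into `ℝ^(e+q)` as a matrix. -/
def inlMatrix (e q : ℕ) : Matrix (Fin (e + q)) (Fin e) ℝ :=
  (1 : Matrix (Fin (e + q)) (Fin (e + q)) ℝ).submatrix id (Fin.castAdd q)

/-- The coordinate inclusion of `ℝ^q` into `ℝ^(e+q)` as a matrix. -/
def inrMatrix (e q : ℕ) : Matrix (Fin (e + q)) (Fin q) ℝ :=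
  (1 : Matrix (Fin (e + q)) (Fin (e + q)) ℝ).submatrix id (Fin.natAdd e)

theorem transpose_inrMatrix_mul_inlMatrix : (inrMatrix e q)ᵀ * inlMatrix e q = 0 := by
  ext i j
  have hij : Fin.natAdd e i ≠ Fin.castAdd q j := by
    simp only [ne_eq, Fin.ext_iff, Fin.val_natAdd, Fin.val_castAdd]
    omega
  simp [inlMatrix, inrMatrix, Matrix.mul_apply, Matrix.one_apply, hij]

theorem transpose_inrMatrix_mul_inrMatrix : (inrMatrix e q)ᵀ * inrMatrix e q = 1 := by
  ext i j
  simp [inrMatrix, Matrix.mul_apply, Matrix.one_apply, eq_comm]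

theorem symMatrixOf_mul_inlMatrix_apply (f : Sym2 (Fin (e + q)) → ℝ) (i : Fin (e + q)) (j : Fin e) :
    (symMatrixOf f * inlMatrix e q) i j = f s(i, Fin.castAdd q j) := by
  simp [inlMatrix, Matrix.mul_apply, Matrix.one_apply]

/-- The map `K ↦ K X` on symmetric matrices, `X` being the coordinate inclusion of `ℝ^e`. -/
def symMulInl (e q : ℕ) :
    (Sym2 (Fin (e + q)) → ℝ) →ₗ[ℝ] Matrix (Fin (e + q)) (Fin e) ℝ where
  toFun f := symMatrixOf f * inlMatrix e q
  map_add' f g := by simp [Matrix.add_mul]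
  map_smul' c f := by simp

theorem finrank_ker_symMulInl_le :
    Module.finrank ℝ (symMulInl e q).ker ≤ Fintype.card (Sym2 (Fin q)) := by
  let ρ : (Sym2 (Fin (e + q)) → ℝ) →ₗ[ℝ] Sym2 (Fin q) → ℝ :=
    LinearMap.funLeft ℝ ℝ (Sym2.map (Fin.natAdd e))
  rw [← Module.finrank_fintype_fun_eq_card ℝ]
  refine LinearMap.finrank_le_finrank_of_injective (f := ρ ∘ₗ (symMulInl e q).ker.subtype) ?_
  rw [← LinearMap.ker_eq_bot, LinearMap.ker_eq_bot']
  rintro ⟨f, hf⟩ hρ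
  have hf_left (i j) : f s(i, Fin.castAdd q j) = 0 :=
    (symMatrixOf_mul_inlMatrix_apply f i j).symm.trans (congrFun₂ hf i j)
  ext ⟨i, j⟩
  induction j using Fin.addCases with
  | left j => exact hf_left i j
  | right j =>
    induction i using Fin.addCases with
    | left i => exact (congrArg f Sym2.eq_swap).trans (hf_left _ i)
    | right i => exact congrFun hρ s(i, j)

theorem exists_linearIndependent_mul_inlMatrix
    (hm : m + Fintype.card (Sym2 (Fin q)) ≤ Fintype.card (Sym2 (Fin (e + q)))) :
    ∃ b : Fin m → Sym2 (Fin (e + q)) → ℝ,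
      LinearIndependent ℝ fun i => symMatrixOf (b i) * inlMatrix e q := by
  have hrank : m ≤ Module.finrank ℝ (symMulInl e q).range := by
    have h := (symMulInl e q).finrank_range_add_finrank_ker
    rw [Module.finrank_fintype_fun_eq_card] at h
    have := finrank_ker_symMulInl_le (e := e) (q := q)
    omega
  obtain ⟨v, hv⟩ := exists_linearIndependent_of_le_finrank hrank
  choose b hb using fun i => (v i).2
  refine ⟨b, ?_⟩
  have := hv.map' (symMulInl e q).range.subtype (Submodule.ker_subtype _)
  exact (funext hb : (fun i => symMulInl e q (b i)) = _) ▸ this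

theorem ae_forall_span_mul_eq_zero
    (hm : m + Fintype.card (Sym2 (Fin q)) ≤ Fintype.card (Sym2 (Fin (e + q)))) :
    ∀ᵐ b : Fin m → Sym2 (Fin (e + q)) → ℝ, ∀ᵐ X : Fin (e + q) → Fin e → ℝ,
      ∀ K ∈ Submodule.span ℝ (Set.range fun i => symMatrixOf (b i)),
        K * Matrix.of X = 0 → K = 0 := by
  let T (p : (Fin m → Sym2 (Fin (e + q)) → ℝ) × (Fin (e + q) → Fin e → ℝ)) :
      (Fin m → ℝ) →ₗ[ℝ] Fin (e + q) → Fin e → ℝ :=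
    Fintype.linearCombination ℝ fun i a c => (symMatrixOf (p.1 i) * Matrix.of p.2) a c
  have hT (t) : AnalyticOnNhd ℝ (fun p => T p t) Set.univ := by
    refine contDiff_omega_iff_analyticOnNhd.1 (contDiff_pi.2 fun a => contDiff_pi.2 fun c => ?_)
    simp only [T, Fintype.linearCombination_apply, Finset.sum_apply, Pi.smul_apply,
      Matrix.mul_apply, Matrix.of_apply, symMatrixOf_apply]
    fun_prop
  obtain ⟨b₀, hb₀⟩ := exists_linearIndependent_mul_inlMatrix hm
  have hinj := ae_injective_of_analyticOnNhd (μ := volume) hT (x₀ := (b₀, inlMatrix e q))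
    (linearIndependent_iff_injective_fintypeLinearCombination.1 hb₀)
  filter_upwards [Measure.ae_ae_of_ae_prod hinj] with b hb
  filter_upwards [hb] with X hX K hK hKX
  obtain ⟨t, rfl⟩ := (Submodule.mem_span_range_iff_exists_fun ℝ).1 hK
  have ht : T (b, X) t = 0 := by
    ext a c
    simpa [T, Fintype.linearCombination_apply, Matrix.sum_mul, Matrix.sum_apply]
      using congrFun₂ hKX a c
  simp [(map_eq_zero_iff _ hX).1 ht]

theorem exists_injective_symPencil
    (hm : m + Fintype.card (Sym2 (Fin q)) ≤ Fintype.card (Sym2 (Fin (e + q)))) :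
    ∃ β : Fin m → Sym2 (Fin (e + q)) → ℝ, Function.Injective (symPencil β (inrMatrix e q)) := by
  obtain ⟨β, hβ⟩ := exists_linearIndependent_mul_inlMatrix hm
  refine ⟨β, LinearMap.ker_eq_bot.1 (LinearMap.ker_eq_bot'.2 ?_)⟩
  rintro ⟨a, t⟩ hat
  have hmat : inrMatrix e q * symMatrixOf a * (inrMatrix e q)ᵀ +
      ∑ i, t i • symMatrixOf (β i) = 0 := by
    simpa [symPencil_apply, symMatrixOf_sum, symMatrixOf_symCongr] using congrArg symMatrixOf hat
  have ht : t = 0 := by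
    have h := congrArg (· * inlMatrix e q) hmat
    simp only [Matrix.add_mul, Matrix.mul_assoc, transpose_inrMatrix_mul_inlMatrix,
      Matrix.mul_zero, zero_add, Matrix.sum_mul, Matrix.smul_mul, Matrix.zero_mul] at h
    exact funext (Fintype.linearIndependent_iff.1 hβ t h)
  have ha : symMatrixOf a = 0 := by
    have h := congrArg ((inrMatrix e q)ᵀ * · * inrMatrix e q) hmat
    simpa [ht, Matrix.mul_assoc, transpose_inrMatrix_mul_inrMatrix,
      ← Matrix.mul_assoc (inrMatrix e q)ᵀ] using h
  rw [ht, symMatrixOf_injective (ha.trans symMatrixOf_zero.symm), Prod.mk_zero_zero]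

theorem ae_injective_symPencil
    (hm : m + Fintype.card (Sym2 (Fin q)) ≤ Fintype.card (Sym2 (Fin (e + q)))) :
    ∀ᵐ p : (Fin m → Sym2 (Fin (e + q)) → ℝ) × (Fin (e + q) → Fin q → ℝ),
      Function.Injective (symPencil p.1 (Matrix.of p.2)) := by
  obtain ⟨β, hβ⟩ := exists_injective_symPencil hm
  have han (x) : AnalyticOnNhd ℝ
      (fun p : (Fin m → Sym2 (Fin (e + q)) → ℝ) × (Fin (e + q) → Fin q → ℝ) =>
        symPencil p.1 (Matrix.of p.2) x) Set.univ := by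
    have h := (contDiff_symPencil (n := e + q) (r := ⊤)).comp (contDiff_prodMk_right x)
    exact contDiff_omega_iff_analyticOnNhd.1 h
  exact ae_injective_of_analyticOnNhd (μ := volume) han (x₀ := (β, inrMatrix e q)) hβ

end GenericMatrices

section LowRank

variable {n q r : ℕ} {S : Submodule ℝ (Sym2 (Fin n) → ℝ)}

theorem exists_posSemidef_one_sub_smul_det_eq_zero {ι : Type*} [Fintype ι] [DecidableEq ι]
    {A : Matrix ι ι ℝ} (hA : A.IsHermitian) (hne : A ≠ 0) :
    ∃ c : ℝ, (1 - c • A).PosSemidef ∧ (1 - c • A).det = 0 := by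
  obtain ⟨U, hUU, hspec⟩ := exists_orthogonal_diagonalization hA
  set l := hA.eigenvalues
  obtain ⟨j, hj⟩ : ∃ j, l j ≠ 0 := Function.ne_iff.1 fun h => hne (hA.eigenvalues_eq_zero_iff.1 h)
  obtain ⟨i, -, hi⟩ := Finset.exists_max_image Finset.univ (fun i => |l i|) ⟨j, Finset.mem_univ j⟩
  have hpos : 0 < |l i| := (abs_pos.2 hj).trans_le (hi j (Finset.mem_univ j))
  have hdiag : 1 - (l i)⁻¹ • A = U * Matrix.diagonal (fun a => 1 - (l i)⁻¹ * l a) * Uᵀ := by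
    have : Matrix.diagonal (fun a => 1 - (l i)⁻¹ * l a) = 1 - (l i)⁻¹ • Matrix.diagonal l := by
      rw [← Matrix.diagonal_one, ← Matrix.diagonal_smul, Matrix.diagonal_sub]
      rfl
    rw [this, mul_sub, sub_mul, mul_one, hUU, Matrix.mul_smul, Matrix.smul_mul, ← hspec]
  refine ⟨(l i)⁻¹, ?_, ?_⟩
  · rw [hdiag]
    refine Matrix.PosSemidef.mul_mul_conjTranspose_same (.diagonal fun a => ?_) U
    refine sub_nonneg.2 ((le_abs_self _).trans ?_)
    rw [abs_mul, abs_inv, inv_mul_le_iff₀ hpos, mul_one]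
    exact hi a (Finset.mem_univ a)
  · rw [hdiag, Matrix.det_mul_right_comm, hUU, one_mul, Matrix.det_diagonal]
    exact Finset.prod_eq_zero (Finset.mem_univ i)
      (by rw [inv_mul_cancel₀ (abs_pos.1 hpos), sub_self])

theorem exists_eq_mul_transpose_of_det_eq_zero {M : Matrix (Fin (r + 1)) (Fin (r + 1)) ℝ}
    (hM : M.PosSemidef) (hdet : M.det = 0) :
    ∃ C : Matrix (Fin (r + 1)) (Fin r) ℝ, M = C * Cᵀ := by
  obtain ⟨U, -, hspec⟩ := exists_orthogonal_diagonalization hM.isHermitian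
  set l := hM.isHermitian.eigenvalues
  obtain ⟨i, -, hi⟩ : ∃ i ∈ Finset.univ, l i = 0 := by
    rw [hM.isHermitian.det_eq_prod_eigenvalues] at hdet
    exact Finset.prod_eq_zero_iff.1 hdet
  refine ⟨Matrix.of fun a j => U a (i.succAbove j) * √(l (i.succAbove j)), ?_⟩
  ext a b
  have hsqrt (j) : √(l j) * √(l j) = l j := Real.mul_self_sqrt (hM.eigenvalues_nonneg j)
  rw [hspec, Matrix.mul_apply, Fin.sum_univ_succAbove _ i, Matrix.mul_diagonal, hi, mul_zero,
    zero_mul, zero_add, Matrix.mul_apply]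
  refine Finset.sum_congr rfl fun j _ => ?_
  rw [Matrix.mul_diagonal, Matrix.transpose_apply, Matrix.transpose_apply, Matrix.of_apply,
    Matrix.of_apply]
  linear_combination (U a (i.succAbove j) * U b (i.succAbove j)) * -hsqrt (i.succAbove j)

theorem exists_ne_zero_symCongr_add_eq_zero (Y : Matrix (Fin n) (Fin q) ℝ)
    (hS : Fintype.card (Sym2 (Fin n)) < Fintype.card (Sym2 (Fin q)) + Module.finrank ℝ S) :
    ∃ a ≠ 0, ∃ u ∈ S, symCongr Y a + u = 0 := by
  have hfin : Module.finrank ℝ (Sym2 (Fin n) → ℝ) <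
      Module.finrank ℝ ((Sym2 (Fin q) → ℝ) × S) := by
    rwa [Module.finrank_prod, Module.finrank_fintype_fun_eq_card,
      Module.finrank_fintype_fun_eq_card]
  obtain ⟨⟨a, u⟩, hau, hne⟩ := (Submodule.ne_bot_iff _).1
    (LinearMap.ker_ne_bot_of_finrank_lt (f := (symCongr Y).coprod S.subtype) hfin)
  have hau' : symCongr Y a + u = 0 := hau
  refine ⟨a, ?_, u, u.2, hau'⟩
  rintro rfl
  simp_all

theorem exists_mul_transpose_eq_add_of_succ {B : Sym2 (Fin n) → ℝ}
    (hS : Fintype.card (Sym2 (Fin n)) < Fintype.card (Sym2 (Fin (r + 1))) + Module.finrank ℝ S)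
    (h : ∃ Y : Matrix (Fin n) (Fin (r + 1)) ℝ, ∃ u ∈ S, Y * Yᵀ = symMatrixOf (B + u)) :
    ∃ Y : Matrix (Fin n) (Fin r) ℝ, ∃ u ∈ S, Y * Yᵀ = symMatrixOf (B + u) := by
  obtain ⟨Y, u, hu, hY⟩ := h
  obtain ⟨a, ha, w, hw, haw⟩ := exists_ne_zero_symCongr_add_eq_zero Y hS
  have hA : symMatrixOf a ≠ 0 := fun h => ha (symMatrixOf_injective h)
  obtain ⟨c, hpsd, hdet⟩ :=
    exists_posSemidef_one_sub_smul_det_eq_zero (A := symMatrixOf a) (isSymm_symMatrixOf a) hA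
  obtain ⟨C, hC⟩ := exists_eq_mul_transpose_of_det_eq_zero hpsd hdet
  refine ⟨Y * C, u + c • w, S.add_mem hu (S.smul_mem c hw), ?_⟩
  calc Y * C * (Y * C)ᵀ = Y * (1 - c • symMatrixOf a) * Yᵀ := by
        rw [hC, Matrix.transpose_mul]
        simp only [Matrix.mul_assoc]
    _ = Y * Yᵀ - c • symMatrixOf (symCongr Y a) := by
        rw [symMatrixOf_symCongr, Matrix.mul_sub, Matrix.sub_mul, Matrix.mul_one, Matrix.mul_smul,
          Matrix.smul_mul]
    _ = symMatrixOf (B + (u + c • w)) := by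
        rw [eq_neg_of_add_eq_zero_left haw, hY, ← neg_one_smul ℝ]
        simp only [symMatrixOf_add, symMatrixOf_smul]
        module

-- Barvinok–Pataki: as long as the factor `Y` has more than `q` columns, one of them can be removed.
theorem exists_mul_transpose_eq_add {B : Sym2 (Fin n) → ℝ} (hq : q ≤ n)
    (hS : Fintype.card (Sym2 (Fin n)) ≤ Fintype.card (Sym2 (Fin q)) + Module.finrank ℝ S)
    (hB : (symMatrixOf B).PosSemidef) :
    ∃ Y : Matrix (Fin n) (Fin q) ℝ, ∃ u ∈ S, Y * Yᵀ = symMatrixOf (B + u) := by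
  induction hq using Nat.decreasingInduction with
  | self =>
    obtain ⟨C, hC⟩ := exists_eq_mul_transpose hB
    exact ⟨C, 0, S.zero_mem, by rw [add_zero, hC]⟩
  | of_succ r _ ih =>
    have hlt : Fintype.card (Sym2 (Fin r)) < Fintype.card (Sym2 (Fin (r + 1))) := by
      rw [Sym2.card, Sym2.card, Fintype.card_fin, Fintype.card_fin,
        Nat.choose_succ_succ' (r + 1) 1, Nat.choose_one_right]
      exact Nat.lt_add_of_pos_left r.succ_pos
    exact exists_mul_transpose_eq_add_of_succ (by omega) (ih (by omega))

end LowRank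

section Charts

variable {ι κ l : Type*} [Fintype ι] [DecidableEq ι]

/-- The orthogonal projection onto the coordinate subspace `ℝ^I`, as a matrix. -/
def coordProj (I : Finset ι) : Matrix ι ι ℝ :=
  Matrix.diagonal fun i => if i ∈ I then 1 else 0

theorem coordProj_mul_apply (I : Finset ι) (M : Matrix ι κ ℝ) (i : ι) (j : κ) :
    (coordProj I * M) i j = if i ∈ I then M i j else 0 := by
  simp [coordProj, Matrix.diagonal_mul]

theorem mul_coordProj_mul_apply (A : Matrix l ι ℝ) (I : Finset ι) (M : Matrix ι κ ℝ) (i : l)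
    (j : κ) : (A * (coordProj I * M)) i j = ∑ x ∈ I, A i x * M x j := by
  simp [Matrix.mul_apply (M := A), coordProj_mul_apply]

omit [Fintype ι] in
theorem transpose_coordProj (I : Finset ι) : (coordProj I)ᵀ = coordProj I :=
  Matrix.diagonal_transpose _

theorem coordProj_mul_self (I : Finset ι) : coordProj I * coordProj I = coordProj I := by
  simp [coordProj, Matrix.diagonal_mul_diagonal]

-- `I` indexes a maximal linearly independent set of columns of `A`, and the columns of `E` express
-- all columns of `A` in terms of these.
theorem exists_coordProj_mul_eq_mul_eq (A : Matrix l ι ℝ) :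
    ∃ (I : Finset ι) (E : Matrix ι ι ℝ), coordProj I * E = E ∧ A * E = A ∧
      ∀ M : Matrix ι ι ℝ, coordProj I * M = M → A * M = 0 → M = 0 := by
  obtain ⟨s, -, -, hspan, hli⟩ := exists_linearIndepOn_extension (K := ℝ)
    (v := fun j : ι => A.col j) (linearIndepOn_empty ℝ _) (Set.empty_subset Set.univ)
  obtain ⟨I, rfl⟩ : ∃ I : Finset ι, (I : Set ι) = s := s.toFinite.exists_finset_coe
  have hcoef (j : ι) : ∃ c : ι → ℝ, ∑ i ∈ I, c i • A.col i = A.col j :=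
    (Submodule.mem_span_image_finset_iff_exists_fun' ℝ).1 (hspan ⟨j, Set.mem_univ j, rfl⟩)
  choose c hc using hcoef
  refine ⟨I, coordProj I * Matrix.of fun i j => c j i, ?_, ?_, fun M hM hAM => ?_⟩
  · rw [← Matrix.mul_assoc, coordProj_mul_self]
  · ext x j
    rw [mul_coordProj_mul_apply, ← Matrix.col_apply A, ← hc j]
    simp [mul_comm]
  · ext i j
    rw [← hM, coordProj_mul_apply]
    split_ifs with hi
    · refine linearIndepOn_finset_iff.1 hli (fun i => M i j) (funext fun x => ?_) i hi
      rw [← hM] at hAM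
      simpa [mul_coordProj_mul_apply, mul_comm] using congrFun₂ hAM x j
    · rfl

/-- The projection onto `ℝ^I` along the graph over `ℝ^Iᶜ` encoded by the off-diagonal block
of `G`. -/
def obliqueProj (I : Finset ι) (G : Matrix ι ι ℝ) : Matrix ι ι ℝ :=
  coordProj I + coordProj I * G * (1 - coordProj I)

/-- The first component of the chart, indexed by `I`, of the variety of pairs of symmetric
matrices with product zero. -/
def chartLeft (I : Finset ι) (G : Matrix ι ι ℝ) : Matrix ι ι ℝ :=
  (obliqueProj I G)ᵀ * G * obliqueProj I G

/-- The second component of the chart, indexed by `I`, of the variety of pairs of symmetric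
matrices with product zero. -/
def chartRight (I : Finset ι) (G : Matrix ι ι ℝ) : Matrix ι ι ℝ :=
  (1 - obliqueProj I G) * G * (1 - obliqueProj I G)ᵀ

theorem exists_coordProj_blocks {D E A K : Matrix ι ι ℝ} (hDt : Dᵀ = D) (hDD : D * D = D)
    (hDE : D * E = E) (hED : E * D = D) (hA : A.IsSymm) (hK : K.IsSymm) :
    ∃ G : Matrix ι ι ℝ, G.IsSymm ∧ D * G * D = D * A * D ∧ D * G * (1 - D) = E - D ∧
      (1 - D) * G * (1 - D) = (1 - D) * K * (1 - D) := by
  set Q := E - D with hQ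
  have hDQ : D * Q = Q := by rw [hQ, mul_sub, hDE, hDD]
  have hQD : Q * D = 0 := by rw [hQ, sub_mul, hED, hDD, sub_self]
  have hQtD : Qᵀ * D = Qᵀ := by rw [← hDt, ← Matrix.transpose_mul, hDQ]
  have hDQt : D * Qᵀ = 0 := by rw [← hDt, ← Matrix.transpose_mul, hQD, Matrix.transpose_zero]
  refine ⟨D * A * D + Q + Qᵀ + (1 - D) * K * (1 - D), ?_, ?_, ?_, ?_⟩
  · simp only [Matrix.IsSymm, Matrix.transpose_add, Matrix.transpose_mul, Matrix.transpose_sub,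
      Matrix.transpose_one, Matrix.transpose_transpose, hDt, hA.eq, hK.eq, mul_assoc]
    abel
  all_goals
    simp only [mul_add, add_mul, mul_sub, sub_mul, mul_one, one_mul, ← mul_assoc, hDD, hDQ, hDQt]
    simp only [mul_assoc, hDD, hQD, hQtD]
    simp only [zero_mul]
    abel

theorem exists_chart {A K : Matrix ι ι ℝ} (hA : A.IsSymm) (hK : K.IsSymm) (hAK : A * K = 0) :
    ∃ (I : Finset ι) (G : Matrix ι ι ℝ), G.IsSymm ∧ chartLeft I G = A ∧ chartRight I G = K := by
  obtain ⟨I, E, hDE, hAE, hinj⟩ := exists_coordProj_mul_eq_mul_eq A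
  set D := coordProj I with hD
  have hDt : Dᵀ = D := transpose_coordProj I
  have hDD : D * D = D := coordProj_mul_self I
  have hED : E * D = D := sub_eq_zero.1 <| hinj _ (by rw [mul_sub, ← mul_assoc, hDE, hDD])
    (by rw [mul_sub, ← mul_assoc, hAE, sub_self])
  have hEK : E * K = 0 := hinj _ (by rw [← mul_assoc, hDE]) (by rw [← mul_assoc, hAE, hAK])
  obtain ⟨G, hG, hDGD, hDG, hcomp⟩ := exists_coordProj_blocks hDt hDD hDE hED hA hK
  have hE : obliqueProj I G = E := by rw [obliqueProj, ← hD, hDG, add_sub_cancel]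
  refine ⟨I, G, hG, ?_, ?_⟩
  · rw [chartLeft, hE]
    calc Eᵀ * G * E = Eᵀ * (D * G * D) * E := by
          conv_lhs => rw [← hDE, Matrix.transpose_mul, hDt]
          simp only [mul_assoc]
      _ = (A * (D * E))ᵀ * (D * E) := by
          rw [hDGD]
          simp only [Matrix.transpose_mul, hDt, hA.eq, mul_assoc]
      _ = A := by rw [hDE, hAE, hA.eq, hAE]
  · have hF : (1 - E) * (1 - D) = 1 - E := by
      rw [mul_sub, mul_one, sub_mul, one_mul, hED, sub_self, sub_zero]
    have hFK : (1 - E) * K = K := by rw [sub_mul, one_mul, hEK, sub_zero]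
    rw [chartRight, hE]
    calc (1 - E) * G * (1 - E)ᵀ = (1 - E) * ((1 - D) * G * (1 - D)) * (1 - E)ᵀ := by
          conv_lhs => rw [← hF, Matrix.transpose_mul]
          simp only [Matrix.transpose_sub, Matrix.transpose_one, hDt, mul_assoc]
      _ = (1 - E) * K * (1 - E)ᵀ := by
          rw [hcomp]
          conv_rhs => rw [← hF, Matrix.transpose_mul]
          simp only [Matrix.transpose_sub, Matrix.transpose_one, hDt, mul_assoc]
      _ = ((1 - E) * K)ᵀ := by rw [hFK, ← hK.eq, ← Matrix.transpose_mul, hK.eq, hFK]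
      _ = K := by rw [hFK, hK.eq]

end Charts

section Transversality

variable {n k : ℕ}

/-- The trace form on symmetric matrices, in the coordinates of `symMatrixOf`. -/
def symForm (n : ℕ) : LinearMap.BilinForm ℝ (Sym2 (Fin n) → ℝ) :=
  LinearMap.mk₂ ℝ (fun a v => (symMatrixOf a * symMatrixOf v).trace)
    (fun a b v => by simp [add_mul]) (fun c a v => by simp)
    (fun a v w => by simp [mul_add]) (fun c a v => by simp)

theorem symForm_apply (a v : Sym2 (Fin n) → ℝ) :
    symForm n a v = (symMatrixOf a * symMatrixOf v).trace := rfl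

theorem symForm_comm (a v : Sym2 (Fin n) → ℝ) : symForm n a v = symForm n v a :=
  Matrix.trace_mul_comm (symMatrixOf a) (symMatrixOf v)

theorem symForm_self_pos {a : Sym2 (Fin n) → ℝ} (ha : a ≠ 0) : 0 < symForm n a a := by
  have h : symForm n a a = (symMatrixOf a * (symMatrixOf a)ᴴ).trace := by
    rw [Matrix.conjTranspose_eq_transpose_of_trivial, (isSymm_symMatrixOf a).eq, symForm_apply]
  rw [h]
  refine (Matrix.posSemidef_self_mul_conjTranspose _).trace_nonneg.lt_of_ne' ?_
  exact fun h0 => ha (symMatrixOf_injective (Matrix.trace_mul_conjTranspose_self_eq_zero_iff.1 h0))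

theorem contDiff_symVec_chartLeft {N : WithTop ℕ∞} (I : Finset (Fin n)) :
    ContDiff ℝ N fun G : Sym2 (Fin n) → ℝ => symVec (chartLeft I (symMatrixOf G)) := by
  refine contDiff_pi.2 fun s => ?_
  simp only [symVec_apply, chartLeft, obliqueProj, Matrix.mul_apply, Matrix.add_apply,
    Matrix.transpose_apply, symMatrixOf_apply]
  fun_prop

theorem contDiff_symVec_chartRight {N : WithTop ℕ∞} (I : Finset (Fin n)) :
    ContDiff ℝ N fun G : Sym2 (Fin n) → ℝ => symVec (chartRight I (symMatrixOf G)) := by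
  refine contDiff_pi.2 fun s => ?_
  simp only [symVec_apply, chartRight, obliqueProj, Matrix.mul_apply, Matrix.sub_apply,
    Matrix.add_apply, Matrix.transpose_apply, symMatrixOf_apply]
  fun_prop

theorem contDiff_symForm {E : Type*} [NormedAddCommGroup E] [NormedSpace ℝ E] {N : WithTop ℕ∞}
    {f g : E → Sym2 (Fin n) → ℝ} (hf : ContDiff ℝ N f) (hg : ContDiff ℝ N g) :
    ContDiff ℝ N fun x => symForm n (f x) (g x) := by
  simp only [symForm_apply, Matrix.trace, Matrix.diag, Matrix.mul_apply, symMatrixOf_apply]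
  fun_prop

/-- Parametrizes the pairs `(β, B)` for which `B + span β` contains a matrix `K` with `A K = 0` for
some `A ≠ 0` orthogonal to `β`, that is, at which `span β` is not transverse to the matrices of the
rank of `K`. If `(A, K)` is the pair given by `p.2` in the chart `I` and `‖A‖ = 1`, then
`(β, K - ∑ i, t i • β i)` is the value at `(β + t A, p.2)`. -/
def transversalityMap (I : Finset (Fin n)) (p : (Fin k → Sym2 (Fin n) → ℝ) × (Sym2 (Fin n) → ℝ)) :
    (Fin k → Sym2 (Fin n) → ℝ) × (Sym2 (Fin n) → ℝ) :=
  let a := symVec (chartLeft I (symMatrixOf p.2))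
  (fun i => p.1 i - symForm n a (p.1 i) • a,
    symVec (chartRight I (symMatrixOf p.2)) -
      ∑ i, symForm n a (p.1 i) • (p.1 i - symForm n a (p.1 i) • a))

theorem differentiable_transversalityMap (I : Finset (Fin n)) :
    Differentiable ℝ (transversalityMap (k := k) I) := by
  have hL : ContDiff ℝ 1 fun p : (Fin k → Sym2 (Fin n) → ℝ) × (Sym2 (Fin n) → ℝ) =>
      symVec (chartLeft I (symMatrixOf p.2)) := (contDiff_symVec_chartLeft I).comp contDiff_snd
  have hR : ContDiff ℝ 1 fun p : (Fin k → Sym2 (Fin n) → ℝ) × (Sym2 (Fin n) → ℝ) =>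
      symVec (chartRight I (symMatrixOf p.2)) := (contDiff_symVec_chartRight I).comp contDiff_snd
  have hform (i : Fin k) : ContDiff ℝ 1 fun p : (Fin k → Sym2 (Fin n) → ℝ) × (Sym2 (Fin n) → ℝ) =>
      symForm n (symVec (chartLeft I (symMatrixOf p.2))) (p.1 i) :=
    contDiff_symForm hL (by fun_prop)
  have hperp (i : Fin k) : ContDiff ℝ 1 fun p : (Fin k → Sym2 (Fin n) → ℝ) × (Sym2 (Fin n) → ℝ) =>
      p.1 i - symForm n (symVec (chartLeft I (symMatrixOf p.2))) (p.1 i) •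
        symVec (chartLeft I (symMatrixOf p.2)) := by
    fun_prop
  exact ((contDiff_pi.2 hperp).prodMk
    (hR.sub (ContDiff.sum fun i _ => (hform i).smul (hperp i)))).differentiable one_ne_zero

theorem volume_image_transversalityMap_eq_zero (I : Finset (Fin n)) :
    volume (transversalityMap (k := k) I ''
      {p | symForm n (symVec (chartLeft I (symMatrixOf p.2)))
        (symVec (chartLeft I (symMatrixOf p.2))) = 1}) = 0 := by
  refine addHaar_image_eq_zero_of_differentiableOn_of_addHaar_eq_zero volume
    (differentiable_transversalityMap I).differentiableOn ?_
  have hL : ContDiff ℝ ⊤ fun p : (Fin k → Sym2 (Fin n) → ℝ) × (Sym2 (Fin n) → ℝ) =>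
      symVec (chartLeft I (symMatrixOf p.2)) := (contDiff_symVec_chartLeft I).comp contDiff_snd
  have han := contDiff_omega_iff_analyticOnNhd.1
    ((contDiff_symForm hL hL).sub (contDiff_const (c := (1 : ℝ))))
  have hne := ae_ne_zero_of_analyticOnNhd (μ := volume) han (x₀ := 0) (by simp [chartLeft])
  simpa [ae_iff, sub_eq_zero] using hne

theorem mem_image_transversalityMap {β : Fin k → Sym2 (Fin n) → ℝ} {B a : Sym2 (Fin n) → ℝ}
    (ha : symForm n a a = 1) (hβ : ∀ i, symForm n a (β i) = 0) {t : Fin k → ℝ}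
    (hmul : symMatrixOf a * symMatrixOf (B + ∑ i, t i • β i) = 0) :
    ∃ I, (β, B) ∈ transversalityMap (k := k) I ''
      {p | symForm n (symVec (chartLeft I (symMatrixOf p.2)))
        (symVec (chartLeft I (symMatrixOf p.2))) = 1} := by
  obtain ⟨I, G, hG, hL, hR⟩ := exists_chart (isSymm_symMatrixOf _) (isSymm_symMatrixOf _) hmul
  have hLG : symVec (chartLeft I (symMatrixOf (symVec G))) = a := by
    rw [symMatrixOf_symVec hG, hL, symVec_symMatrixOf]
  have hRG : symVec (chartRight I (symMatrixOf (symVec G))) = B + ∑ i, t i • β i := by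
    rw [symMatrixOf_symVec hG, hR, symVec_symMatrixOf]
  refine ⟨I, (fun i => β i + t i • a, symVec G), ?_, ?_⟩
  · rwa [Set.mem_ofPred_eq, hLG]
  · simp [transversalityMap, hLG, hRG, hβ, ha]

theorem ae_forall_symMatrixOf_mul_ne_zero (n k : ℕ) :
    ∀ᵐ p : (Fin k → Sym2 (Fin n) → ℝ) × (Sym2 (Fin n) → ℝ),
      ∀ u ∈ Submodule.span ℝ (Set.range p.1), ∀ a ≠ 0, (∀ i, symForm n a (p.1 i) = 0) →
        symMatrixOf a * symMatrixOf (p.2 + u) ≠ 0 := by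
  have hnull := measure_iUnion_null fun I : Finset (Fin n) =>
    volume_image_transversalityMap_eq_zero (k := k) I
  filter_upwards [measure_eq_zero_iff_ae_notMem.1 hnull] with p hp u hu a ha hort hmul
  obtain ⟨t, rfl⟩ := (Submodule.mem_span_range_iff_exists_fun ℝ).1 hu
  have hpos := Real.sqrt_pos.2 (symForm_self_pos ha)
  set c := (√(symForm n a a))⁻¹ with hc
  have hunit : symForm n (c • a) (c • a) = 1 := by
    have := Real.mul_self_sqrt (symForm_self_pos ha).le
    simp only [map_smul, LinearMap.smul_apply, smul_eq_mul, hc]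
    field_simp
    linarith
  refine hp (Set.mem_iUnion.2 (mem_image_transversalityMap hunit (fun i => ?_) (t := t) ?_))
  · rw [map_smul, LinearMap.smul_apply, hort, smul_zero]
  · rw [symMatrixOf_smul, Matrix.smul_mul, hmul, smul_zero]

end Transversality

section SlidingMap

variable {n q : ℕ}

theorem fderiv_apply_eq_of_quadratic {E F : Type*} [NormedAddCommGroup E] [NormedSpace ℝ E]
    [NormedAddCommGroup F] [NormedSpace ℝ F] {f : E → F} {x h : E} {d e : F}
    (hf : DifferentiableAt ℝ f x) (hquad : ∀ t : ℝ, f (x + t • h) = f x + t • d + t ^ 2 • e) :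
    fderiv ℝ f x h = d := by
  have hline : HasDerivAt (fun t : ℝ => f x + t • d + t ^ 2 • e) d 0 := by
    have hlin : HasDerivAt (fun t : ℝ => f x + t • d) d 0 := by
      simpa using ((hasDerivAt_id (0 : ℝ)).smul_const d).const_add (f x)
    simpa using hlin.fun_add ((hasDerivAt_pow 2 (0 : ℝ)).smul_const e)
  have hf' : HasDerivAt (fun t : ℝ => f (x + t • h)) (fderiv ℝ f x h) 0 :=
    hf.hasFDerivAt.hasLineDerivAt h
  exact hf'.unique (by simpa only [hquad] using hline)

theorem isCompl_orthogonal_symForm (S : Submodule ℝ (Sym2 (Fin n) → ℝ)) :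
    IsCompl S ((symForm n).orthogonal S) := by
  have hrefl : (symForm n).IsRefl := fun a v h => (symForm_comm v a).trans h
  refine (LinearMap.BilinForm.isCompl_orthogonal_iff_disjoint hrefl).2 ?_
  refine Submodule.disjoint_def.2 fun a ha hort => ?_
  by_contra hne
  exact (symForm_self_pos hne).ne' (LinearMap.BilinForm.mem_orthogonal_iff.1 hort a ha)

/-- The orthogonal projection onto `S` with respect to the trace form. -/
noncomputable def symProj (S : Submodule ℝ (Sym2 (Fin n) → ℝ)) :
    (Sym2 (Fin n) → ℝ) →ₗ[ℝ] Sym2 (Fin n) → ℝ :=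
  S.projection _ (isCompl_orthogonal_symForm S)

theorem symProj_mem (S : Submodule ℝ (Sym2 (Fin n) → ℝ)) (v : Sym2 (Fin n) → ℝ) :
    symProj S v ∈ S :=
  Submodule.projection_apply_mem _ _

theorem symProj_of_mem {S : Submodule ℝ (Sym2 (Fin n) → ℝ)} {u : Sym2 (Fin n) → ℝ} (hu : u ∈ S) :
    symProj S u = u :=
  Submodule.projection_apply_of_mem_left _ hu

theorem symForm_sub_symProj {S : Submodule ℝ (Sym2 (Fin n) → ℝ)} {u : Sym2 (Fin n) → ℝ}
    (hu : u ∈ S) (v : Sym2 (Fin n) → ℝ) : symForm n (v - symProj S v) u = 0 := by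
  rw [symForm_comm]
  exact LinearMap.BilinForm.mem_orthogonal_iff.1
    (Submodule.sub_projection_mem (isCompl_orthogonal_symForm S) v) u hu

/-- On `S × ℝ^(n × q)` the value of this map is `(Y Yᵀ - u, Y)`, so that the solutions of
`Y Yᵀ ∈ B + S` are its preimages of the points `(B, Y)`; the component of `v` orthogonal to `S`
makes the dimensions of domain and codomain agree. -/
noncomputable def slidingMap (S : Submodule ℝ (Sym2 (Fin n) → ℝ))
    (p : (Sym2 (Fin n) → ℝ) × (Fin n → Fin q → ℝ)) :
    (Sym2 (Fin n) → ℝ) × (Fin n → Fin q → ℝ) :=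
  (symVec (Matrix.of p.2 * (Matrix.of p.2)ᵀ) - symProj S p.1,
    Matrix.of p.2 - symMatrixOf (p.1 - symProj S p.1) * Matrix.of p.2)

theorem contDiff_slidingMap {r : WithTop ℕ∞} (S : Submodule ℝ (Sym2 (Fin n) → ℝ)) :
    ContDiff ℝ r (slidingMap (q := q) S) := by
  have hproj : ContDiff ℝ r (symProj S) := (symProj S).toContinuousLinearMap.contDiff
  have hprojFst : ContDiff ℝ r fun p : (Sym2 (Fin n) → ℝ) × (Fin n → Fin q → ℝ) =>
      symProj S p.1 := hproj.comp contDiff_fst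
  have hfst : ContDiff ℝ r fun p : (Sym2 (Fin n) → ℝ) × (Fin n → Fin q → ℝ) =>
      symVec (Matrix.of p.2 * (Matrix.of p.2)ᵀ) - symProj S p.1 := by
    refine ContDiff.sub (contDiff_pi.2 fun s => ?_) hprojFst
    simp only [symVec_apply, Matrix.mul_apply, Matrix.transpose_apply, Matrix.of_apply]
    fun_prop
  refine hfst.prodMk (contDiff_pi.2 fun i => contDiff_pi.2 fun j => ?_)
  have hcoord (s : Sym2 (Fin n)) : ContDiff ℝ r
      fun p : (Sym2 (Fin n) → ℝ) × (Fin n → Fin q → ℝ) => symProj S p.1 s :=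
    contDiff_pi.1 hprojFst s
  simp only [Matrix.sub_apply, Matrix.mul_apply, symMatrixOf_apply, Matrix.of_apply, Pi.sub_apply]
  fun_prop

theorem fderiv_slidingMap_apply {S : Submodule ℝ (Sym2 (Fin n) → ℝ)} {u : Sym2 (Fin n) → ℝ}
    (hu : u ∈ S) (Y : Fin n → Fin q → ℝ) (h : (Sym2 (Fin n) → ℝ) × (Fin n → Fin q → ℝ)) :
    fderiv ℝ (slidingMap S) (u, Y) h =
      ((symVec (Matrix.of Y * (Matrix.of h.2)ᵀ + Matrix.of h.2 * (Matrix.of Y)ᵀ) - symProj S h.1,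
        Matrix.of h.2 - symMatrixOf (h.1 - symProj S h.1) * Matrix.of Y) :
        (Sym2 (Fin n) → ℝ) × (Fin n → Fin q → ℝ)) := by
  refine fderiv_apply_eq_of_quadratic
    (e := (symVec (Matrix.of h.2 * (Matrix.of h.2)ᵀ),
      -(symMatrixOf (h.1 - symProj S h.1) * Matrix.of h.2)))
    ((contDiff_slidingMap S (r := 1)).differentiable one_ne_zero _) fun t => ?_
  have hY : Matrix.of (Y + t • h.2) = Matrix.of Y + t • Matrix.of h.2 := rfl
  have hv : u + t • h.1 - symProj S (u + t • h.1) = t • (h.1 - symProj S h.1) := by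
    rw [map_add, map_smul, symProj_of_mem hu, smul_sub]
    abel
  refine Prod.ext ?_ ?_
  · simp only [slidingMap, Prod.fst_add, Prod.snd_add, Prod.smul_fst, Prod.smul_snd, hY,
      Matrix.transpose_add, Matrix.transpose_smul, Matrix.add_mul, Matrix.mul_add,
      Matrix.smul_mul, Matrix.mul_smul, map_add, map_smul]
    module
  · simp only [slidingMap, Prod.fst_add, Prod.snd_add, Prod.smul_fst, Prod.smul_snd, hY, hv,
      symProj_of_mem hu, sub_self, symMatrixOf_zero, symMatrixOf_smul, Matrix.mul_add,
      Matrix.smul_mul, Matrix.mul_smul, Matrix.zero_mul]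
    change _ = (_ + t • _ + t ^ 2 • _ : Matrix (Fin n) (Fin q) ℝ)
    module

theorem eq_zero_of_symVec_eq_symProj {S : Submodule ℝ (Sym2 (Fin n) → ℝ)}
    {Y : Matrix (Fin n) (Fin q) ℝ} {v : Sym2 (Fin n) → ℝ}
    (htrans : ∀ a ≠ 0, (∀ u ∈ S, symForm n a u = 0) → symMatrixOf a * (Y * Yᵀ) ≠ 0)
    (hv : symVec (Y * (symMatrixOf (v - symProj S v) * Y)ᵀ +
      symMatrixOf (v - symProj S v) * Y * Yᵀ) = symProj S v) : v = 0 := by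
  set w := v - symProj S v with hw
  have hsymm := (isSymm_symMatrixOf w).eq
  have hwY : symMatrixOf w * Y = 0 := by
    have hort : symForm n w (symProj S v) = 0 := symForm_sub_symProj (symProj_mem S v) v
    rw [← hv, symForm_apply, symMatrixOf_symVec
      (by simp [Matrix.IsSymm, hsymm, Matrix.mul_assoc, add_comm])] at hort
    have htrace : (symMatrixOf w * Y * (symMatrixOf w * Y)ᴴ).trace = 0 := by
      rw [Matrix.conjTranspose_eq_transpose_of_trivial]
      have : (symMatrixOf w * (symMatrixOf w * Y * Yᵀ)).trace =
          (symMatrixOf w * (Y * (symMatrixOf w * Y)ᵀ)).trace := by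
        rw [Matrix.trace_mul_comm, Matrix.transpose_mul, hsymm]
        simp only [Matrix.mul_assoc]
      rw [Matrix.mul_add, Matrix.trace_add, this] at hort
      rw [Matrix.mul_assoc]
      linarith
    exact Matrix.trace_mul_conjTranspose_self_eq_zero_iff.1 htrace
  have hw0 : w = 0 := by
    by_contra hne
    refine htrans w hne (fun u hu => symForm_sub_symProj hu v) ?_
    rw [← Matrix.mul_assoc, hwY, Matrix.zero_mul]
  rw [hwY, Matrix.transpose_zero, Matrix.mul_zero, Matrix.zero_mul, add_zero, map_zero] at hv
  rw [hw0, ← hv, sub_zero] at hw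
  exact hw.symm

theorem injective_fderiv_slidingMap {S : Submodule ℝ (Sym2 (Fin n) → ℝ)} {u : Sym2 (Fin n) → ℝ}
    (hu : u ∈ S) {Y : Fin n → Fin q → ℝ} (htrans : ∀ a ≠ 0, (∀ u ∈ S, symForm n a u = 0) →
      symMatrixOf a * (Matrix.of Y * (Matrix.of Y)ᵀ) ≠ 0) :
    Function.Injective (fderiv ℝ (slidingMap S) (u, Y)) := by
  refine (injective_iff_map_eq_zero _).2 fun ⟨v, Z⟩ h => ?_
  rw [fderiv_slidingMap_apply hu] at h
  have hZ : Matrix.of Z = symMatrixOf (v - symProj S v) * Matrix.of Y :=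
    sub_eq_zero.1 (congrArg Prod.snd h)
  have hv : v = 0 :=
    eq_zero_of_symVec_eq_symProj htrans (hZ ▸ sub_eq_zero.1 (congrArg Prod.fst h))
  rw [hv, map_zero, sub_zero, symMatrixOf_zero, Matrix.zero_mul] at hZ
  exact Prod.mk_eq_zero.2 ⟨hv, hZ⟩

theorem map_slidingMap_nhds {S : Submodule ℝ (Sym2 (Fin n) → ℝ)} {u : Sym2 (Fin n) → ℝ}
    (hu : u ∈ S) {Y : Fin n → Fin q → ℝ} (htrans : ∀ a ≠ 0, (∀ u ∈ S, symForm n a u = 0) →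
      symMatrixOf a * (Matrix.of Y * (Matrix.of Y)ᵀ) ≠ 0) :
    (nhds (u, Y)).map (slidingMap S) = nhds (slidingMap S (u, Y)) := by
  have hsurj := LinearMap.injective_iff_surjective.1 (injective_fderiv_slidingMap hu htrans)
  have hstrict := (contDiff_slidingMap (q := q) (r := 1) S).contDiffAt.hasStrictFDerivAt
    (x := (u, Y)) one_ne_zero
  exact hstrict.map_nhds_eq_of_surj (LinearMap.range_eq_top.2 hsurj)

theorem ae_ae_notMem_image_slidingMap (S : Submodule ℝ (Sym2 (Fin n) → ℝ))
    {N : Set (Fin n → Fin q → ℝ)} (hN : volume N = 0) :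
    ∀ᵐ B, ∀ᵐ Y, (B, Y) ∉ slidingMap S '' (Set.univ ×ˢ N) := by
  refine Measure.ae_ae_of_ae_prod (measure_eq_zero_iff_ae_notMem.1 ?_)
  refine addHaar_image_eq_zero_of_differentiableOn_of_addHaar_eq_zero volume
    ((contDiff_slidingMap S (r := 1)).differentiable one_ne_zero).differentiableOn ?_
  exact (Measure.prod_prod _ _).trans (by rw [hN, mul_zero])

theorem exists_notMem_mul_transpose_eq_add {S : Submodule ℝ (Sym2 (Fin n) → ℝ)}
    {N : Set (Fin n → Fin q → ℝ)} {B u : Sym2 (Fin n) → ℝ} {Y : Fin n → Fin q → ℝ}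
    (hB : ∀ᵐ Y, (B, Y) ∉ slidingMap S '' (Set.univ ×ˢ N)) (hu : u ∈ S)
    (hY : Matrix.of Y * (Matrix.of Y)ᵀ = symMatrixOf (B + u))
    (htrans : ∀ a ≠ 0, (∀ u ∈ S, symForm n a u = 0) → symMatrixOf a * symMatrixOf (B + u) ≠ 0) :
    ∃ Y ∉ N, ∃ u ∈ S, Matrix.of Y * (Matrix.of Y)ᵀ = symMatrixOf (B + u) := by
  have hval : slidingMap S (u, Y) = (B, Y) := by
    simp only [slidingMap, hY, symVec_symMatrixOf, symProj_of_mem hu, add_sub_cancel_right,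
      sub_self, symMatrixOf_zero, Matrix.zero_mul, sub_zero]
    rfl
  have hrange : Set.range (slidingMap S) ∈ nhds (B, Y) := by
    rw [← hval, ← map_slidingMap_nhds hu (hY ▸ htrans)]
    exact Filter.range_mem_map
  have hnear : {Y' | (B, Y') ∈ Set.range (slidingMap (q := q) S)} ∈ nhds Y :=
    (Continuous.prodMk_right B).continuousAt hrange
  obtain ⟨Y', hY', ⟨v, Z⟩, hvZ⟩ := (Measure.dense_of_ae hB).inter_nhds_nonempty hnear
  refine ⟨Z, fun hZ => hY' ⟨(v, Z), ⟨Set.mem_univ v, hZ⟩, hvZ⟩, symProj S v, symProj_mem S v, ?_⟩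
  have hZZ : symVec (Matrix.of Z * (Matrix.of Z)ᵀ) = B + symProj S v :=
    sub_eq_iff_eq_add.1 (congrArg Prod.fst hvZ)
  rw [← hZZ, symMatrixOf_symVec (by simp [Matrix.IsSymm])]

theorem ae_exists_notMem_mul_transpose_eq_add {S : Submodule ℝ (Sym2 (Fin n) → ℝ)} (hq : q ≤ n)
    (hS : Fintype.card (Sym2 (Fin n)) ≤ Fintype.card (Sym2 (Fin q)) + Module.finrank ℝ S)
    {N : Set (Fin n → Fin q → ℝ)} (hN : volume N = 0)
    (htrans : ∀ᵐ B, ∀ u ∈ S, ∀ a ≠ 0, (∀ u ∈ S, symForm n a u = 0) →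
      symMatrixOf a * symMatrixOf (B + u) ≠ 0) :
    ∀ᵐ B, (symMatrixOf B).PosSemidef →
      ∃ Y ∉ N, ∃ u ∈ S, Matrix.of Y * (Matrix.of Y)ᵀ = symMatrixOf (B + u) := by
  filter_upwards [ae_ae_notMem_image_slidingMap S hN, htrans] with B hB hBtrans hpsd
  obtain ⟨Y, u, hu, hY⟩ := exists_mul_transpose_eq_add hq hS hpsd
  exact exists_notMem_mul_transpose_eq_add hB hu hY (hBtrans u hu)

end SlidingMap

section NondegenerateSolutions

variable {n q k e : ℕ}

theorem isOpen_setOf_posDef_symMatrixOf :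
    IsOpen {a : Sym2 (Fin q) → ℝ | (symMatrixOf a).PosDef} := by
  refine isOpen_iff_mem_nhds.2 fun a ha => ?_
  have hcont : Continuous fun p : (Sym2 (Fin q) → ℝ) × (Fin q → ℝ) =>
      star p.2 ⬝ᵥ symMatrixOf p.1 *ᵥ p.2 := by
    fun_prop
  have hsphere : ∀ᶠ b in nhds a, ∀ x ∈ Metric.sphere (0 : Fin q → ℝ) 1,
      0 < star x ⬝ᵥ symMatrixOf b *ᵥ x :=
    (isCompact_sphere 0 1).eventually_forall_of_forall_eventually fun x hx =>
      continuousAt_const.eventually_lt hcont.continuousAt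
        (ha.dotProduct_mulVec_pos (ne_zero_of_mem_unit_sphere ⟨x, hx⟩))
  filter_upwards [hsphere] with b hb
  refine Matrix.PosDef.of_dotProduct_mulVec_pos (isSymm_symMatrixOf b) fun x hx => ?_
  have hnorm := norm_pos_iff.2 hx
  have hunit : ‖x‖⁻¹ • x ∈ Metric.sphere (0 : Fin q → ℝ) 1 := by
    simp [norm_smul, hnorm.ne']
  have h := hb _ hunit
  simp only [star_smul, Matrix.mulVec_smul, smul_dotProduct, dotProduct_smul, smul_eq_mul] at h
  simpa [hnorm] using h

/-- The triples `((β, B), Y)` for which `B + span β` contains a positive semidefinite matrix with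
column space `range Y`, at a point where the pencil `symPencil β Y` is injective. -/
def nondegenerateSolutions (n q k : ℕ) :
    Set (((Fin k → Sym2 (Fin n) → ℝ) × (Sym2 (Fin n) → ℝ)) × (Fin n → Fin q → ℝ)) :=
  {p | Function.Injective (symPencil p.1.1 (Matrix.of p.2)) ∧
    ∃ x : (Sym2 (Fin q) → ℝ) × (Fin k → ℝ),
      (symMatrixOf x.1).PosDef ∧ symPencil p.1.1 (Matrix.of p.2) x = p.1.2}

theorem mem_nondegenerateSolutions {β : Fin k → Sym2 (Fin n) → ℝ} {B u : Sym2 (Fin n) → ℝ}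
    {Y : Fin n → Fin q → ℝ} (hinj : Function.Injective (symPencil β (Matrix.of Y)))
    (hu : u ∈ Submodule.span ℝ (Set.range β))
    (hY : Matrix.of Y * (Matrix.of Y)ᵀ = symMatrixOf (B + u)) :
    ((β, B), Y) ∈ nondegenerateSolutions n q k := by
  obtain ⟨t, rfl⟩ := (Submodule.mem_span_range_iff_exists_fun ℝ).1 hu
  refine ⟨hinj, (symVec 1, -t), ?_, ?_⟩
  · rw [symMatrixOf_symVec Matrix.isSymm_one]
    exact Matrix.PosDef.one
  · simp [symPencil_apply, symCongr_apply, symMatrixOf_symVec Matrix.isSymm_one, hY,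
      symVec_symMatrixOf, -symMatrixOf_add]

theorem isOpen_setOf_injective_symPencil :
    IsOpen {p : (Fin k → Sym2 (Fin n) → ℝ) × (Fin n → Fin q → ℝ) |
      Function.Injective (symPencil p.1 (Matrix.of p.2))} := by
  refine isOpen_setOf_injective_of_continuous fun x => ?_
  have h := (contDiff_symPencil (n := n) (q := q) (k := k) (r := 1)).continuous.comp
    (Continuous.prodMk_right x)
  exact h

theorem eventually_exists_posDef_symPencil_eq {β : Fin k → Sym2 (Fin n) → ℝ}
    {Y : Fin n → Fin q → ℝ} (hsurj : Function.Surjective (symPencil β (Matrix.of Y)))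
    {x : (Sym2 (Fin q) → ℝ) × (Fin k → ℝ)} (hx : (symMatrixOf x.1).PosDef) :
    ∀ᶠ p : (Sym2 (Fin n) → ℝ) × (Fin k → Sym2 (Fin n) → ℝ) × (Fin n → Fin q → ℝ) in
      nhds (symPencil β (Matrix.of Y) x, β, Y),
        ∃ y ∈ {y : (Sym2 (Fin q) → ℝ) × (Fin k → ℝ) | (symMatrixOf y.1).PosDef},
          symPencil p.2.1 (Matrix.of p.2.2) y = p.1 := by
  have hU : {y : (Sym2 (Fin q) → ℝ) × (Fin k → ℝ) | (symMatrixOf y.1).PosDef} ∈ nhds x :=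
    (isOpen_setOf_posDef_symMatrixOf.preimage continuous_fst).mem_nhds hx
  have hderiv := (symPencil β (Matrix.of Y)).toContinuousLinearMap.hasFDerivAt (x := x)
  have hsmooth := contDiff_symPencil (n := n) (q := q) (k := k) (r := 1)
  exact eventually_exists_eq_of_surjective (y₀ := (β, Y)) hsmooth hderiv hsurj hU

theorem isOpen_nondegenerateSolutions
    (hcard : k + Fintype.card (Sym2 (Fin q)) = Fintype.card (Sym2 (Fin n))) :
    IsOpen (nondegenerateSolutions n q k) := by
  refine isOpen_iff_mem_nhds.2 ?_
  rintro ⟨⟨β, B⟩, Y⟩ ⟨hinj, x, hx, rfl : symPencil β (Matrix.of Y) x = B⟩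
  have hsurj : Function.Surjective (symPencil β (Matrix.of Y)) :=
    (LinearMap.injective_iff_surjective_of_finrank_eq_finrank
      (by simp [← hcard, add_comm])).1 hinj
  have hsolve := eventually_exists_posDef_symPencil_eq hsurj hx
  have hswap : Continuous fun p : ((Fin k → Sym2 (Fin n) → ℝ) × (Sym2 (Fin n) → ℝ)) ×
      (Fin n → Fin q → ℝ) => (p.1.2, p.1.1, p.2) := by
    fun_prop
  have hproj : Continuous fun p : ((Fin k → Sym2 (Fin n) → ℝ) × (Sym2 (Fin n) → ℝ)) ×
      (Fin n → Fin q → ℝ) => (p.1.1, p.2) := by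
    fun_prop
  filter_upwards [(isOpen_setOf_injective_symPencil.preimage hproj).mem_nhds hinj,
    hswap.continuousAt.eventually hsolve] with p hp ⟨y, hy, hyp⟩ using ⟨hp, y, hy, hyp⟩

theorem exists_posSemidef_of_mem_nondegenerateSolutions (hq : 0 < q)
    {β : Fin k → Sym2 (Fin n) → ℝ} {B : Sym2 (Fin n) → ℝ} {Y : Fin n → Fin q → ℝ}
    (h : ((β, B), Y) ∈ nondegenerateSolutions n q k) :
    ∃ A : Matrix (Fin q) (Fin q) ℝ, ∃ u ∈ Submodule.span ℝ (Set.range β),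
      (Matrix.of Y * A * (Matrix.of Y)ᵀ).PosSemidef ∧ Matrix.of Y * A * (Matrix.of Y)ᵀ ≠ 0 ∧
        Matrix.of Y * A * (Matrix.of Y)ᵀ = symMatrixOf (B - u) := by
  obtain ⟨hinj, ⟨a, t⟩, ha, hB : symPencil β (Matrix.of Y) (a, t) = B⟩ := h
  refine ⟨symMatrixOf a, ∑ i, t i • β i,
    (Submodule.mem_span_range_iff_exists_fun ℝ).2 ⟨t, rfl⟩,
    ha.posSemidef.mul_mul_conjTranspose_same _, fun h0 => ?_, ?_⟩
  · have ha0 : symPencil β (Matrix.of Y) (a, 0) = 0 := by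
      simp [symPencil_apply, symCongr_apply, h0]
    have : (a, (0 : Fin k → ℝ)) = 0 := (map_eq_zero_iff _ hinj).1 ha0
    obtain rfl : a = 0 := congrArg Prod.fst this
    simpa using ha.diag_pos (i := ⟨0, hq⟩)
  · rw [← hB, symPencil_apply, add_sub_cancel_right, symMatrixOf_symCongr]

theorem exists_transpose_mul_eq_zero (hn : e + q ≤ n) (Y : Matrix (Fin n) (Fin q) ℝ) :
    ∃ X P : Matrix (Fin n) (Fin e) ℝ, Xᵀ * Y = 0 ∧ Xᵀ * P = 1 := by
  have hker : e ≤ Module.finrank ℝ (Yᵀ).mulVecLin.ker := by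
    have h := (Yᵀ).mulVecLin.finrank_range_add_finrank_ker
    have := Submodule.finrank_le (Yᵀ).mulVecLin.range
    simp only [Module.finrank_fintype_fun_eq_card, Fintype.card_fin] at h this
    omega
  obtain ⟨v, hv⟩ := exists_linearIndependent_of_le_finrank hker
  have hcol : LinearIndependent ℝ fun c => (v c : Fin n → ℝ) :=
    hv.map' (Submodule.subtype _) (Submodule.ker_subtype _)
  set X : Matrix (Fin n) (Fin e) ℝ := Matrix.of fun i c => (v c : Fin n → ℝ) i with hX
  have hgram : (Xᵀ * X).PosDef :=
    Matrix.PosDef.conjTranspose_mul_self X (Matrix.mulVec_injective_iff.2 hcol)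
  refine ⟨X, X * (Xᵀ * X)⁻¹, ?_, ?_⟩
  · ext c j
    have : ∑ i, Y i j * (v c : Fin n → ℝ) i = 0 := congrFun (LinearMap.mem_ker.1 (v c).2) j
    simpa [hX, Matrix.mul_apply, mul_comm] using this
  · rw [← Matrix.mul_assoc, Matrix.mul_nonsing_inv _ hgram.det_pos.ne'.isUnit]

theorem eventually_exists_transpose_mul_eq_zero {X P : Matrix (Fin n) (Fin e) ℝ}
    {Y : Fin n → Fin q → ℝ} (hXY : Xᵀ * Matrix.of Y = 0) (hXP : Xᵀ * P = 1)
    {U : Set (Fin n → Fin q → ℝ)} (hU : U ∈ nhds Y) :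
    ∀ᶠ X' : Fin n → Fin e → ℝ in nhds X, ∃ Z ∈ U, (Matrix.of X')ᵀ * Matrix.of Z = 0 := by
  let T : (Fin n → Fin q → ℝ) →ₗ[ℝ] Fin e → Fin q → ℝ :=
    { toFun Z := Xᵀ * Matrix.of Z
      map_add' Z Z' := Matrix.mul_add Xᵀ (Matrix.of Z) (Matrix.of Z')
      map_smul' c Z := Matrix.mul_smul Xᵀ c (Matrix.of Z) }
  have hT : Function.Surjective T := fun W =>
    ⟨P * Matrix.of W, show Xᵀ * (P * Matrix.of W) = W by
      rw [← Matrix.mul_assoc, hXP, Matrix.one_mul]; rfl⟩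
  let F (p : (Fin n → Fin q → ℝ) × (Fin n → Fin e → ℝ)) : Fin e → Fin q → ℝ :=
    (Matrix.of p.2)ᵀ * Matrix.of p.1
  have hsmooth : ContDiff ℝ 1 F := by
    refine contDiff_pi.2 fun c => contDiff_pi.2 fun j => ?_
    simp only [F, Matrix.mul_apply, Matrix.transpose_apply, Matrix.of_apply]
    fun_prop
  have hsolve := eventually_exists_eq_of_surjective (F := Fin n → Fin e → ℝ) (y₀ := X) hsmooth
    T.toContinuousLinearMap.hasFDerivAt hT hU
  rw [show F (Y, X) = 0 from hXY] at hsolve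
  have hcont : Continuous fun X' : Fin n → Fin e → ℝ => ((0 : Fin e → Fin q → ℝ), X') := by
    fun_prop
  exact hcont.continuousAt.eventually hsolve

theorem not_ae_mleExists_of_mem_nondegenerateSolutions (hq : 0 < q) (hn : e + q ≤ n)
    (hcard : k + Fintype.card (Sym2 (Fin q)) = Fintype.card (Sym2 (Fin n)))
    {β : Fin k → Sym2 (Fin n) → ℝ} {B : Sym2 (Fin n) → ℝ} {Y : Fin n → Fin q → ℝ}
    (h : ((β, B), Y) ∈ nondegenerateSolutions n q k)
    {L : Submodule ℝ (Matrix (Fin n) (Fin n) ℝ)}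
    (hL : ∀ u ∈ Submodule.span ℝ (Set.range β), symMatrixOf (B - u) ∈ L) :
    ¬ ∀ᵐ X : Fin n → Fin e → ℝ,
      MLEExists (linearConcentrationModel L) (Matrix.of X * (Matrix.of X)ᵀ) := by
  intro hae
  obtain ⟨X₀, P, hX₀, hP⟩ := exists_transpose_mul_eq_zero hn (Matrix.of Y)
  have hnear : {Z | ((β, B), Z) ∈ nondegenerateSolutions n q k} ∈ nhds Y :=
    ((isOpen_nondegenerateSolutions hcard).preimage (Continuous.prodMk_right _)).mem_nhds h
  obtain ⟨X, hMLE, Z, hZ, hXZ⟩ := (Measure.dense_of_ae hae).inter_nhds_nonempty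
    (eventually_exists_transpose_mul_eq_zero hX₀ hP hnear)
  obtain ⟨A, u, hu, hpsd, hne, hK⟩ := exists_posSemidef_of_mem_nondegenerateSolutions hq hZ
  refine not_mleExists_of_mul_eq_zero (hK ▸ hL u hu) hpsd hne ?_ hMLE
  have hZX : (Matrix.of Z)ᵀ * Matrix.of X = 0 := by
    simpa using congrArg Matrix.transpose hXZ
  rw [Matrix.mul_assoc, hZX, Matrix.mul_zero]

end NondegenerateSolutions

section GenericSolutions

variable {e q k : ℕ}

theorem measurableSet_setOf_exists_mem_nondegenerateSolutions {n : ℕ}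
    (hcard : k + Fintype.card (Sym2 (Fin q)) = Fintype.card (Sym2 (Fin n))) :
    MeasurableSet {p : (Fin k → Sym2 (Fin n) → ℝ) × (Sym2 (Fin n) → ℝ) |
      (symMatrixOf p.2).PosSemidef → ∃ Y, (p, Y) ∈ nondegenerateSolutions n q k} := by
  have hpsd : IsClosed {p : (Fin k → Sym2 (Fin n) → ℝ) × (Sym2 (Fin n) → ℝ) |
      (symMatrixOf p.2).PosSemidef} :=
    isClosed_setOf_posSemidef.preimage (continuous_symMatrixOf.comp continuous_snd)
  have hsol := isOpenMap_fst _ (isOpen_nondegenerateSolutions hcard)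
  convert hpsd.isOpen_compl.measurableSet.union hsol.measurableSet using 1
  ext p
  simp [imp_iff_not_or]

theorem linearIndependent_of_injective_symPencil {n : ℕ} {β : Fin k → Sym2 (Fin n) → ℝ}
    {Y : Matrix (Fin n) (Fin q) ℝ} (h : Function.Injective (symPencil β Y)) :
    LinearIndependent ℝ β := by
  rw [linearIndependent_iff_injective_fintypeLinearCombination]
  intro s t hst
  have := h (a₁ := (0, s)) (a₂ := (0, t)) (by simpa [symPencil] using hst)
  exact congrArg Prod.snd this

theorem ae_exists_mem_nondegenerateSolutions
    (hcard : k + Fintype.card (Sym2 (Fin q)) = Fintype.card (Sym2 (Fin (e + q)))) :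
    ∀ᵐ p : (Fin k → Sym2 (Fin (e + q)) → ℝ) × (Sym2 (Fin (e + q)) → ℝ),
      (symMatrixOf p.2).PosSemidef → ∃ Y, (p, Y) ∈ nondegenerateSolutions (e + q) q k := by
  refine (Measure.ae_prod_iff_ae_ae
    (measurableSet_setOf_exists_mem_nondegenerateSolutions hcard)).2 ?_
  filter_upwards [Measure.ae_ae_of_ae_prod (ae_injective_symPencil hcard.le),
    Measure.ae_ae_of_ae_prod (ae_forall_symMatrixOf_mul_ne_zero (e + q) k)] with β hinj htrans
  obtain ⟨Y₀, hY₀⟩ := hinj.exists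
  have hdim : Module.finrank ℝ (Submodule.span ℝ (Set.range β)) = k := by
    simpa using finrank_span_eq_card (linearIndependent_of_injective_symPencil hY₀)
  have hlow := ae_exists_notMem_mul_transpose_eq_add (S := Submodule.span ℝ (Set.range β))
    (Nat.le_add_left q e) (by omega) (ae_iff.1 hinj)
    (htrans.mono fun B hB u hu a ha hau =>
      hB u hu a ha fun i => hau _ (Submodule.subset_span ⟨i, rfl⟩))
  filter_upwards [hlow] with B hB hpsd
  obtain ⟨Y, hY, u, hu, hYu⟩ := hB hpsd
  exact ⟨Y, mem_nondegenerateSolutions (not_not.1 hY) hu hYu⟩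

end GenericSolutions

section Threshold

variable {n e q k m : ℕ}

/-- The linear concentration model of the span of the symmetric matrices with coordinates `b i`. -/
abbrev spanModel (b : Fin m → Sym2 (Fin n) → ℝ) : Set (Matrix (Fin n) (Fin n) ℝ) :=
  linearConcentrationModel (Submodule.span ℝ (Set.range fun i => symMatrixOf (b i)))

theorem exists_surjective_funLeft_prod_sum {𝕜 V : Type*} [Field 𝕜] [AddCommGroup V] [Module 𝕜 V]
    (hk : k < m) {c : Fin m → 𝕜} (hc : c ≠ 0) :
    ∃ σ : Fin k → Fin m, Function.Surjective
      ((LinearMap.funLeft 𝕜 V σ).prod (∑ i, c i • LinearMap.proj i)) := by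
  obtain ⟨m, rfl⟩ := Nat.exists_eq_add_one_of_ne_zero (Nat.ne_zero_of_lt hk)
  obtain ⟨j, hj⟩ := Function.ne_iff.1 hc
  let σ : Fin k → Fin (m + 1) := j.succAbove ∘ Fin.castLE (Nat.lt_succ_iff.1 hk)
  have hσ : Function.Injective σ :=
    Fin.succAbove_right_injective.comp (Fin.castLE_injective _)
  have hσj (i) : σ i ≠ j := Fin.succAbove_ne _ _
  refine ⟨σ, fun ⟨β, B⟩ => ?_⟩
  let f : Fin (m + 1) → V := Function.extend σ β 0
  refine ⟨f + Pi.single j ((c j)⁻¹ • (B - ∑ i, c i • f i)), Prod.ext ?_ ?_⟩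
  · funext i
    simp [LinearMap.funLeft_apply, f, hσ.extend_apply, hσj]
  · have hcj : c j • (c j)⁻¹ • (B - ∑ i, c i • f i) = B - ∑ i, c i • f i := smul_inv_smul₀ hj _
    simp [smul_add, Finset.sum_add_distrib, Pi.single_apply, hcj]

theorem symMatrixOf_mem_span {b : Fin m → Sym2 (Fin n) → ℝ} {a : Sym2 (Fin n) → ℝ}
    (ha : a ∈ Submodule.span ℝ (Set.range b)) :
    symMatrixOf a ∈ Submodule.span ℝ (Set.range fun i => symMatrixOf (b i)) := by
  obtain ⟨t, rfl⟩ := (Submodule.mem_span_range_iff_exists_fun ℝ).1 ha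
  exact (Submodule.mem_span_range_iff_exists_fun ℝ).2 ⟨t, by simp [symMatrixOf_sum]⟩

theorem ae_not_ae_mleExists_of_posSemidef (hq : 0 < q)
    (hm : Fintype.card (Sym2 (Fin (e + q))) < m + Fintype.card (Sym2 (Fin q)))
    {c : Fin m → ℝ} (hc : c ≠ 0) :
    ∀ᵐ b : Fin m → Sym2 (Fin (e + q)) → ℝ, (symMatrixOf (∑ i, c i • b i)).PosSemidef →
      ¬ ∀ᵐ X : Fin (e + q) → Fin e → ℝ, MLEExists (spanModel b) (Matrix.of X * (Matrix.of X)ᵀ) := by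
  have hle : Fintype.card (Sym2 (Fin q)) ≤ Fintype.card (Sym2 (Fin (e + q))) := by
    simpa [Sym2.card] using Nat.choose_le_choose 2 (by omega : q + 1 ≤ e + q + 1)
  obtain ⟨k, hcard⟩ := Nat.exists_eq_add_of_le' hle
  obtain ⟨σ, hσ⟩ := exists_surjective_funLeft_prod_sum (k := k)
    (V := Sym2 (Fin (e + q)) → ℝ) (by omega) hc
  filter_upwards [ae_comp_of_surjective (μ := volume) _ hσ
    (ae_exists_mem_nondegenerateSolutions hcard.symm)] with b hb hpsd
  obtain ⟨Y, hY⟩ := hb (by simpa using hpsd)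
  refine not_ae_mleExists_of_mem_nondegenerateSolutions hq le_rfl hcard.symm hY fun u hu =>
    symMatrixOf_mem_span (Submodule.sub_mem _ ?_ (Submodule.span_mono ?_ hu))
  · exact (Submodule.mem_span_range_iff_exists_fun ℝ).2 ⟨c, by simp⟩
  · exact Set.range_comp_subset_range σ b

theorem exists_rat_posDef_of_nonempty {b : Fin m → Sym2 (Fin n) → ℝ}
    (h : (spanModel b).Nonempty) :
    ∃ c : Fin m → ℚ, (symMatrixOf (∑ i, (c i : ℝ) • b i)).PosDef := by
  obtain ⟨K, hK, hpd⟩ := h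
  obtain ⟨t, rfl⟩ := (Submodule.mem_span_range_iff_exists_fun ℝ).1 hK
  have hopen : IsOpen {c : Fin m → ℝ | (symMatrixOf (∑ i, c i • b i)).PosDef} :=
    isOpen_setOf_posDef_symMatrixOf.preimage (by fun_prop)
  exact (DenseRange.piMap fun _ : Fin m => Rat.denseRange_cast (𝕜 := ℝ)).exists_mem_open hopen
    ⟨t, by simpa [symMatrixOf_sum] using hpd⟩

theorem two_mul_card_sym2_fin (r : ℕ) : 2 * Fintype.card (Sym2 (Fin r)) = r * (r + 1) := by
  rw [Sym2.card, Fintype.card_fin, Nat.choose_two_right, Nat.add_sub_cancel, mul_comm r]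
  exact Nat.two_mul_div_two_of_even (Nat.even_mul_pred_self (r + 1))

theorem natCast_le_mul_sub_iff :
    (m : ℤ) ≤ ((e + q : ℕ) : ℤ) * e - (e : ℤ) * ((e : ℤ) - 1) / 2 ↔
      m + Fintype.card (Sym2 (Fin q)) ≤ Fintype.card (Sym2 (Fin (e + q))) := by
  have hcard :
      (Fintype.card (Sym2 (Fin (e + q))) : ℤ) - Fintype.card (Sym2 (Fin q)) =
        ((e + q : ℕ) : ℤ) * e - (e : ℤ) * ((e : ℤ) - 1) / 2 := by
    obtain ⟨w, hw⟩ := even_iff_two_dvd.1 (Int.even_mul_pred_self (e : ℤ))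
    have h₁ := two_mul_card_sym2_fin (e + q)
    have h₂ := two_mul_card_sym2_fin q
    rw [hw, Int.mul_ediv_cancel_left _ two_ne_zero]
    zify at h₁ h₂
    push_cast
    linarith
  omega

theorem ae_mleExists_of_le (he : e ≤ n)
    (hm : (m : ℤ) ≤ (n : ℤ) * (e : ℤ) - (e : ℤ) * ((e : ℤ) - 1) / 2) :
    ∀ᵐ b : Fin m → Sym2 (Fin n) → ℝ, (spanModel b).Nonempty →
      ∀ᵐ X : Fin n → Fin e → ℝ, MLEExists (spanModel b) (Matrix.of X * (Matrix.of X)ᵀ) := by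
  obtain ⟨q, rfl⟩ := Nat.exists_eq_add_of_le he
  filter_upwards [ae_forall_span_mul_eq_zero (natCast_le_mul_sub_iff.1 hm)] with b hb ⟨K₀, hK₀⟩
  filter_upwards [hb] with X hX
  exact mleExists_of_forall_mul_eq_zero hK₀ fun K hK _ => hX K hK

theorem ae_not_ae_mleExists_of_lt (he : e < n)
    (hm : (n : ℤ) * (e : ℤ) - (e : ℤ) * ((e : ℤ) - 1) / 2 < m) :
    ∀ᵐ b : Fin m → Sym2 (Fin n) → ℝ, (spanModel b).Nonempty →
      ¬ ∀ᵐ X : Fin n → Fin e → ℝ, MLEExists (spanModel b) (Matrix.of X * (Matrix.of X)ᵀ) := by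
  obtain ⟨q, rfl⟩ := Nat.exists_eq_add_of_le he.le
  have hq : 0 < q := by omega
  have hcard := not_le.1 (mt natCast_le_mul_sub_iff.2 hm.not_ge)
  have hrat := ae_all_iff.2 fun c : {c : Fin m → ℚ // (fun i => (c i : ℝ)) ≠ 0} =>
    ae_not_ae_mleExists_of_posSemidef (e := e) hq hcard c.2
  filter_upwards [hrat] with b hb hne
  obtain ⟨c, hc⟩ := exists_rat_posDef_of_nonempty hne
  refine hb ⟨c, fun h0 => ?_⟩ hc.posSemidef
  have hdiag := hc.diag_pos (i := Fin.natAdd e ⟨0, hq⟩)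
  simp [funext_iff.1 h0] at hdiag

theorem mlt_generic_linear_concentration_general (n m : ℕ) (hm₁ : 1 ≤ m)
    (hm : m ≤ n * (n + 1) / 2) :
    ∃ d : ℕ,
      IsLeast {e : ℕ | 0 < e ∧ (m : ℤ) ≤ (n : ℤ) * (e : ℤ) - (e : ℤ) * ((e : ℤ) - 1) / 2} d ∧
      ∀ᵐ b : Fin m → (Sym2 (Fin n) → ℝ) ∂volume,
        (linearConcentrationModel
          (Submodule.span ℝ (Set.range fun i => symMatrixOf (b i)))).Nonempty →
          IsMLThreshold
            (linearConcentrationModel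
              (Submodule.span ℝ (Set.range fun i => symMatrixOf (b i)))) d := by
  have hn : 0 < n := Nat.pos_of_ne_zero (by rintro rfl; omega)
  set D := {e : ℕ | 0 < e ∧ (m : ℤ) ≤ (n : ℤ) * (e : ℤ) - (e : ℤ) * ((e : ℤ) - 1) / 2}
  have hnD : n ∈ D := ⟨hn, (natCast_le_mul_sub_iff (q := 0)).2 <| by
    simpa [Sym2.card, Nat.choose_two_right, mul_comm] using hm⟩
  obtain ⟨d, hd⟩ : ∃ d, IsLeast D d := ⟨sInf D, Nat.sInf_mem ⟨n, hnD⟩, fun _ => Nat.sInf_le⟩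
  have hdn : d ≤ n := hd.2 hnD
  have hlower := (ae_ball_iff (Set.to_countable (Set.Ioo 0 d))).2 fun e he =>
    ae_not_ae_mleExists_of_lt (he.2.trans_le hdn) <| not_le.1 fun h =>
      he.2.not_ge (hd.2 ⟨he.1, h⟩)
  refine ⟨d, hd, ?_⟩
  filter_upwards [ae_mleExists_of_le hdn hd.1.2, hlower] with b hb hb' hne
  exact ⟨⟨hd.1.1, hb hne⟩, fun e he => not_lt.1 fun hlt => hb' e ⟨he.1, hlt⟩ hne he.2⟩

end Threshold

/-- For almost every `m`-tuple of symmetric matrices whose members are positive definite,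
`m ≥ 1`, the maximum likelihood threshold of the linear concentration model of their span
is the minimum positive integer `d` with `m ≤ nd − d(d−1)/2` (which exists). -/
theorem mlt_generic_linear_concentration (n m : ℕ) (hm₁ : 1 ≤ m) (hm : m ≤ n * (n + 1) / 2) :
    ∃ d : ℕ,
      IsLeast {e : ℕ | 0 < e ∧ (m : ℤ) ≤ (n : ℤ) * (e : ℤ) - (e : ℤ) * ((e : ℤ) - 1) / 2} d ∧
      ∀ᵐ b : Fin m → (Sym2 (Fin n) → ℝ) ∂volume,
        (∀ i, (symMatrixOf (b i)).PosDef) →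
          IsMLThreshold
            (linearConcentrationModel
              (Submodule.span ℝ (Set.range fun i => symMatrixOf (b i)))) d := by
  obtain ⟨d, hd, hb⟩ := mlt_generic_linear_concentration_general n m hm₁ hm
  exact ⟨d, hd, hb.mono fun b hb hpd => hb ⟨_, Submodule.subset_span ⟨⟨0, hm₁⟩, rfl⟩, hpd _⟩⟩
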